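/- Let Q(ξ) = (ξ_1², ξ_1 ξ_2) be a pair of real quadratic forms on ℝ². Then for all exponents p, q ∈ [1,∞] with q > 5 and 1/p + 4/q < 1, there exists a constant C = C(p,q) such that ‖E^Q f‖_{L^q(ℝ^4)} ≤ C ‖f‖_{L^p([0,1]²)} for every measurable function f : [0,1]² → ℂ. Moreover this range is sharp up to endpoints: if for some p, q ∈ [1,∞] and finite C the estimate ‖E^Q f‖_{L^q(ℝ^4)} ≤ C ‖f‖_{L^p([0,1]²)} holds for all measurable f, then q ≥ 5 and 1/p + 4/q ≤ 1. -/

import Mathlib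

open MeasureTheory
open scoped ENNReal

/-- The extension operator associated to the quadratic surface
`S_Q = {(ξ, Q ξ) : ξ ∈ [0,1]^d} ⊆ ℝ^{d+n}`. -/
noncomputable def extOp (d n : ℕ) (Q : (Fin d → ℝ) → Fin n → ℝ)
    (f : (Fin d → ℝ) → ℂ) (x : Fin (d + n) → ℝ) : ℂ :=
  ∫ ξ in Set.Icc (0 : Fin d → ℝ) 1,
    Complex.exp (2 * (Real.pi : ℂ) * Complex.I *
      ((((∑ i : Fin d, x (Fin.castAdd n i) * ξ i) +
        ∑ j : Fin n, x (Fin.natAdd d j) * Q ξ j : ℝ)) : ℂ)) * f ξ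

/-!
Write `x`, `y`, `t`, `u` for the frequencies dual to `ξ`, `η`, `ξ²`, `ξη`. For frozen `y` and `u`
the operator is the extension operator of the parabola applied to `g ξ = f̂(ξ, y + u ξ)`, the
Fourier transform of `f` in `η` read off along a line. The square of a parabola extension, in
midpoint and difference coordinates `(m, h)`, has phase `2 m x + (2 m² + h² / 2) t`. At height `λ`,
differences `|h| ≤ δ ∼ λ / ‖g‖₂²` contribute at most `λ / 2`; beyond `δ`, Plancherel in `(x, t)`
costs a factor `1 / h` against the autocorrelation of `|g|²`. For `|g| ≤ 1` that
autocorrelation is at most `‖g‖₂²` and has total mass `‖g‖₂⁴`, so it lives at `|h| ≳ ‖g‖₂²` and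
powers of `‖g‖₂²` may be traded for powers of `h`. Integrating in `(y, u)`, the lines at
`ξ = m ± h / 2` are transversal with Jacobian `h`, which leaves the weight `h ^ (q - 6)`, integrable
near `0` exactly when `q > 5`. This bounds the operator on functions with `|f| ≤ 1`, and dyadic
decomposition together with the trivial `L¹ → L^∞` bound gives the whole range.

Conversely, a strip of width `1 / n` in the `ξ` variable has extension of size `1 / n` on a box of
measure `∼ n⁴`, so `1 / p + 4 / q ≤ 1`. The boxes of the `n` parallel strips together cover a set
of measure `∼ n⁵`. On each box, toggling its strip changes the extension by `1 / n`, so averaging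
`|E 1_S|^q` over all unions `S` of strips gives `≳ n ^ (5 - q)`, and `q ≥ 5`.
-/

open Set Filter
open scoped FourierTransform Topology

section Plancherel

variable {V E : Type*} [NormedAddCommGroup V] [InnerProductSpace ℝ V] [FiniteDimensional ℝ V]
  [MeasurableSpace V] [BorelSpace V] [NormedAddCommGroup E] [InnerProductSpace ℂ E]
  [CompleteSpace E]

lemma fourier_ae_eq_fourier_toLp {h : V → E} (h1 : Integrable h) (h2 : MemLp h 2) :
    𝓕 h =ᵐ[volume] (𝓕 (h2.toLp h) : Lp E 2 (volume : Measure V)) := by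
  set G : Lp E 2 (volume : Measure V) := 𝓕 (h2.toLp h)
  have hcont : Continuous (𝓕 h) :=
    VectorFourier.fourierIntegral_continuous Real.continuous_fourierChar
      (L := innerₗ V) continuous_inner h1
  refine ae_eq_of_integral_contDiff_smul_eq hcont.locallyIntegrable
    ((Lp.memLp G).locallyIntegrable (by norm_num)) fun g hg hgc ↦ ?_
  let φ : SchwartzMap V ℂ := HasCompactSupport.toSchwartzMap (f := fun x ↦ (g x : ℂ))
    (hgc.comp_left (g := fun x : ℝ ↦ (x : ℂ)) (by simp)) (Complex.ofRealCLM.contDiff.comp hg)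
  have hφ (u : V → E) : ∫ x, g x • u x = ∫ x, φ x • u x :=
    integral_congr_ae (.of_forall fun x ↦ (Complex.coe_smul (g x) (u x)).symm)
  have hdual := congrArg (fun T ↦ T φ) (Lp.fourier_toTemperedDistribution_eq (h2.toLp h))
  simp only [TemperedDistribution.fourier_apply, Lp.toTemperedDistribution_apply] at hdual
  have hparseval := VectorFourier.integral_fourierIntegral_smul_eq_flip (μ := volume)
    (ν := volume) (L := innerₗ V) (f := (φ : V → ℂ)) (g := h) Real.continuous_fourierChar
    continuous_inner φ.integrable h1
  rw [flip_innerₗ] at hparseval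
  rw [hφ, hφ, ← hdual]
  refine hparseval.symm.trans (integral_congr_ae ?_)
  filter_upwards [h2.coeFn_toLp] with x hx
  rw [hx]
  rfl

lemma eLpNorm_two_fourier {h : V → E} (h1 : Integrable h) (h2 : MemLp h 2) :
    eLpNorm (𝓕 h) 2 volume = eLpNorm h 2 volume := by
  rw [eLpNorm_congr_ae (fourier_ae_eq_fourier_toLp h1 h2), ← Lp.enorm_def, ← ofReal_norm,
    Lp.norm_fourier_eq, ofReal_norm, Lp.enorm_def, eLpNorm_congr_ae h2.coeFn_toLp]

lemma lintegral_enorm_fourier_sq_le {h : V → E} (h1 : Integrable h) :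
    ∫⁻ x, ‖𝓕 h x‖ₑ ^ 2 ≤ ∫⁻ v, ‖h v‖ₑ ^ 2 := by
  have hsq (k : V → E) : ∫⁻ v, ‖k v‖ₑ ^ 2 = eLpNorm k 2 volume ^ 2 := by
    simpa using (eLpNorm_nnreal_pow_eq_lintegral (f := k) (p := 2) (μ := volume) two_ne_zero).symm
  rw [hsq, hsq]
  rcases eq_or_ne (eLpNorm h 2 volume) ⊤ with htop | hfin
  · simp [htop]
  · rw [eLpNorm_two_fourier h1 ⟨h1.1, hfin.lt_top⟩]

end Plancherel

section Character

@[fun_prop]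
lemma continuous_coe_fourierChar : Continuous fun t : ℝ ↦ (𝐞 t : ℂ) :=
  continuous_subtype_val.comp Real.continuous_fourierChar

@[fun_prop]
lemma measurable_coe_fourierChar : Measurable fun t : ℝ ↦ (𝐞 t : ℂ) :=
  continuous_coe_fourierChar.measurable

lemma coe_fourierChar_add (s t : ℝ) : (𝐞 (s + t) : ℂ) = 𝐞 s * 𝐞 t := by
  rw [AddChar.map_add_eq_mul, Circle.coe_mul]

lemma enorm_fourierChar_mul (t : ℝ) (z : ℂ) : ‖(𝐞 t : ℂ) * z‖ₑ = ‖z‖ₑ := by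
  rw [enorm_mul, ← ofReal_norm, Circle.norm_coe, ENNReal.ofReal_one, one_mul]

lemma integrable_fourierChar_mul {α : Type*} [MeasurableSpace α] {μ : Measure α}
    {k : α → ℂ} (hk : Integrable k μ) {θ : α → ℝ} (hθ : Measurable θ) :
    Integrable (fun a ↦ (𝐞 (θ a) : ℂ) * k a) μ :=
  hk.bdd_mul (c := 1) (measurable_coe_fourierChar.comp hθ).aestronglyMeasurable
    (.of_forall fun a ↦ (Circle.norm_coe (𝐞 (θ a))).le)

lemma lintegral_enorm_sq_integral_fourierChar_le {h : ℝ → ℂ} (hh : Integrable h) :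
    ∫⁻ x, ‖∫ v, (𝐞 (x * v) : ℂ) * h v‖ₑ ^ 2 ≤ ∫⁻ v, ‖h v‖ₑ ^ 2 := by
  have hfourier (x : ℝ) : ∫ v, (𝐞 (x * v) : ℂ) * h v = 𝓕 h (-x) := by
    simp [Real.fourier_eq, Circle.smul_def, mul_comm]
  simp_rw [hfourier]
  rw [lintegral_neg_eq_self fun x ↦ ‖𝓕 h x‖ₑ ^ 2]
  exact lintegral_enorm_fourier_sq_le hh

lemma enorm_smul_sq_mul_ofReal_inv {c : ℝ} (hc : 0 < c) (z : ℂ) :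
    ‖c • z‖ₑ ^ 2 * ENNReal.ofReal c⁻¹ = ENNReal.ofReal c * ‖z‖ₑ ^ 2 := by
  have hcancel : ENNReal.ofReal c * ENNReal.ofReal c⁻¹ = 1 := by
    rw [← ENNReal.ofReal_mul hc.le, mul_inv_cancel₀ hc.ne', ENNReal.ofReal_one]
  rw [enorm_smul, Real.enorm_of_nonneg hc.le]
  calc (ENNReal.ofReal c * ‖z‖ₑ) ^ 2 * ENNReal.ofReal c⁻¹
      = ENNReal.ofReal c * ‖z‖ₑ ^ 2 * (ENNReal.ofReal c * ENNReal.ofReal c⁻¹) := by ring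
    _ = ENNReal.ofReal c * ‖z‖ₑ ^ 2 := by rw [hcancel, mul_one]

lemma lintegral_enorm_sq_setIntegral_fourierChar_comp_le {s : Set ℝ} {φ φ' : ℝ → ℝ} {h : ℝ → ℂ}
    (hs : MeasurableSet s) (hφ : ∀ b ∈ s, HasDerivWithinAt φ (φ' b) s b) (hinj : InjOn φ s)
    (hφ' : ∀ b ∈ s, φ' b ≠ 0) (hh : IntegrableOn h s) :
    ∫⁻ x : ℝ, ‖∫ b in s, (𝐞 (x * φ b) : ℂ) * h b‖ₑ ^ 2
      ≤ ∫⁻ b in s, ‖h b‖ₑ ^ 2 * ENNReal.ofReal |φ' b|⁻¹ := by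
  obtain ⟨k, hk⟩ : ∃ k : ℝ → ℂ, ∀ b ∈ s, |φ' b| • k (φ b) = h b := by
    refine ⟨fun v ↦ |φ' (φ.invFunOn s v)|⁻¹ • h (φ.invFunOn s v), fun b hb ↦ ?_⟩
    simp only [hinj.leftInvOn_invFunOn hb]
    rw [smul_inv_smul₀ (abs_ne_zero.2 (hφ' b hb))]
  have himage : MeasurableSet (φ '' s) :=
    hs.image_of_continuousOn_injOn (fun b hb ↦ (hφ b hb).continuousWithinAt) hinj
  have hk_int : IntegrableOn k (φ '' s) :=
    (integrableOn_image_iff_integrableOn_abs_deriv_smul hs hφ hinj k).2 <|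
      hh.congr_fun (fun b hb ↦ (hk b hb).symm) hs
  have hchange (x : ℝ) : ∫ b in s, (𝐞 (x * φ b) : ℂ) * h b
      = ∫ v, (𝐞 (x * v) : ℂ) * (φ '' s).indicator k v := by
    simp_rw [← indicator_mul_right (φ '' s) (fun v ↦ (𝐞 (x * v) : ℂ))]
    rw [integral_indicator himage, integral_image_eq_integral_abs_deriv_smul hs hφ hinj]
    exact setIntegral_congr_fun hs fun b hb ↦ by
      simp only [← mul_smul_comm, hk b hb]
  calc ∫⁻ x : ℝ, ‖∫ b in s, (𝐞 (x * φ b) : ℂ) * h b‖ₑ ^ 2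
      ≤ ∫⁻ v, ‖(φ '' s).indicator k v‖ₑ ^ 2 := by
        simp_rw [hchange]
        exact lintegral_enorm_sq_integral_fourierChar_le (hk_int.integrable_indicator himage)
    _ = ∫⁻ v in φ '' s, ‖k v‖ₑ ^ 2 := by
        rw [← lintegral_indicator himage]
        congr with v
        by_cases hv : v ∈ φ '' s <;> simp [hv]
    _ = ∫⁻ b in s, ENNReal.ofReal |φ' b| * ‖k (φ b)‖ₑ ^ 2 :=
        lintegral_image_eq_lintegral_abs_deriv_mul hs hφ hinj _
    _ = ∫⁻ b in s, ‖h b‖ₑ ^ 2 * ENNReal.ofReal |φ' b|⁻¹ :=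
        setLIntegral_congr_fun hs fun b hb ↦ by
          simp only [← hk b hb, enorm_smul_sq_mul_ofReal_inv (abs_pos.2 (hφ' b hb))]

end Character

section MidpointCoordinates

lemma integral_eq_two_mul_integral_Ioi_of_even {F : ℝ → ℂ} (hF : Integrable F)
    (heven : ∀ h, F (-h) = F h) : ∫ h, F h = 2 * ∫ h in Ioi 0, F h := by
  have hneg : ∫ h in Iic 0, F h = ∫ h in Ioi 0, F h := by
    simpa only [heven, neg_zero] using (integral_comp_neg_Ioi (0 : ℝ) F).symm
  rw [← integral_add_compl measurableSet_Ioi hF, compl_Ioi, hneg, two_mul]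

lemma lintegral_eq_two_mul_lintegral_Ioi_of_even {F : ℝ → ℝ≥0∞} (heven : ∀ h, F (-h) = F h) :
    ∫⁻ h, F h = 2 * ∫⁻ h in Ioi 0, F h := by
  have hneg : ∫⁻ h in Iic 0, F h = ∫⁻ h in Ioi 0, F h := by
    rw [setLIntegral_congr Iio_ae_eq_Iic.symm, ← lintegral_indicator measurableSet_Iio,
      ← lintegral_neg_eq_self, ← lintegral_indicator measurableSet_Ioi]
    congr with h
    simp [indicator, heven]
  rw [← lintegral_add_compl _ (measurableSet_Ioi (a := (0 : ℝ))), compl_Ioi, hneg, two_mul]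

/-- The change of variables `(m, h) ↦ (m + h / 2, m - h / 2)` on `ℝ × ℝ`, from midpoint and
difference to the two points themselves. -/
noncomputable def midpointDiff : (ℝ × ℝ) ≃ₗ[ℝ] (ℝ × ℝ) where
  toFun z := (z.1 + z.2 / 2, z.1 - z.2 / 2)
  invFun z := ((z.1 + z.2) / 2, z.1 - z.2)
  left_inv z := by ext <;> simp
  right_inv z := by ext <;> simp <;> ring
  map_add' x y := by ext <;> simp <;> ring
  map_smul' c x := by ext <;> simp <;> ring

lemma midpointDiff_apply (z : ℝ × ℝ) : midpointDiff z = (z.1 + z.2 / 2, z.1 - z.2 / 2) := rfl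

lemma det_midpointDiff : LinearMap.det (midpointDiff : (ℝ × ℝ) →ₗ[ℝ] (ℝ × ℝ)) = -1 := by
  rw [← LinearMap.det_toMatrix (Module.Basis.finTwoProd ℝ), Matrix.det_fin_two]
  simp [LinearMap.toMatrix_apply, midpointDiff_apply]
  norm_num

lemma measurePreserving_midpointDiff : MeasurePreserving midpointDiff where
  measurable := midpointDiff.toContinuousLinearEquiv.continuous.measurable
  map_eq := by
    have hmap := Measure.map_linearMap_addHaar_eq_smul_addHaar (volume : Measure (ℝ × ℝ))
      (f := (midpointDiff : (ℝ × ℝ) →ₗ[ℝ] (ℝ × ℝ))) (by simp [det_midpointDiff])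
    rw [det_midpointDiff] at hmap
    simpa using hmap

lemma measurableEmbedding_midpointDiff : MeasurableEmbedding midpointDiff :=
  midpointDiff.toContinuousLinearEquiv.toHomeomorph.measurableEmbedding

end MidpointCoordinates

section Parabola

/-- The extension operator of the parabola `{(ξ, ξ²)}`, at the point `(x, t)`. -/
noncomputable def parabolaExt (g : ℝ → ℂ) (x t : ℝ) : ℂ :=
  ∫ ξ, (𝐞 (x * ξ + t * ξ ^ 2) : ℂ) * g ξ

/-- The tensor product `g ⊗ g` in midpoint and difference coordinates. -/
noncomputable def midpointProd (g : ℝ → ℂ) (z : ℝ × ℝ) : ℂ :=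
  g (z.1 + z.2 / 2) * g (z.1 - z.2 / 2)

/-- The bilinear extension operator of the parabola in midpoint and difference coordinates
`(m, h)`, in which the two phases `x ξ + t ξ²` add up to `x (2 m) + t (2 m² + h² / 2)`. -/
noncomputable def midpointExt (k : ℝ × ℝ → ℂ) (x t : ℝ) : ℂ :=
  ∫ z : ℝ × ℝ, (𝐞 (x * (2 * z.1) + t * (2 * z.1 ^ 2 + z.2 ^ 2 / 2)) : ℂ) * k z

/-- The autocorrelation of `|g|²`: the amount of `L²` mass of `g ⊗ g` at difference `h`. -/
noncomputable def autocorr (g : ℝ → ℂ) (h : ℝ) : ℝ≥0∞ := ∫⁻ m, ‖midpointProd g (m, h)‖ₑ ^ 2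

variable {g : ℝ → ℂ} {k : ℝ × ℝ → ℂ}

lemma measurable_midpointProd (hg : Measurable g) : Measurable (midpointProd g) := by
  unfold midpointProd
  fun_prop

lemma midpointProd_neg (g : ℝ → ℂ) (m h : ℝ) : midpointProd g (m, -h) = midpointProd g (m, h) := by
  simp only [midpointProd, neg_div, sub_neg_eq_add, ← sub_eq_add_neg]
  exact mul_comm _ _

lemma integrable_midpointProd (hg : Integrable g) : Integrable (midpointProd g) :=
  (measurePreserving_midpointDiff.integrable_comp_emb measurableEmbedding_midpointDiff).2
    (hg.mul_prod hg)

lemma integrable_midpointExt_integrand (hk : Integrable k) (x t : ℝ) :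
    Integrable fun z : ℝ × ℝ ↦
      (𝐞 (x * (2 * z.1) + t * (2 * z.1 ^ 2 + z.2 ^ 2 / 2)) : ℂ) * k z :=
  integrable_fourierChar_mul hk (by fun_prop)

lemma parabolaExt_sq (g : ℝ → ℂ) (x t : ℝ) :
    parabolaExt g x t ^ 2 = midpointExt (midpointProd g) x t := by
  rw [sq, parabolaExt, ← integral_prod_mul, ← Measure.volume_eq_prod,
    ← measurePreserving_midpointDiff.integral_comp measurableEmbedding_midpointDiff, midpointExt]
  congr with z
  have hphase : x * (2 * z.1) + t * (2 * z.1 ^ 2 + z.2 ^ 2 / 2)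
      = (x * (z.1 + z.2 / 2) + t * (z.1 + z.2 / 2) ^ 2)
        + (x * (z.1 - z.2 / 2) + t * (z.1 - z.2 / 2) ^ 2) := by ring
  rw [hphase, coe_fourierChar_add (x * (z.1 + z.2 / 2) + _), midpointProd, midpointDiff_apply]
  exact mul_mul_mul_comm _ _ _ _

lemma midpointExt_add {k₁ k₂ : ℝ × ℝ → ℂ} (h₁ : Integrable k₁) (h₂ : Integrable k₂) (x t : ℝ) :
    midpointExt (k₁ + k₂) x t = midpointExt k₁ x t + midpointExt k₂ x t := by
  simp only [midpointExt, Pi.add_apply, mul_add (_ : ℂ)]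
  exact integral_add (integrable_midpointExt_integrand h₁ x t)
    (integrable_midpointExt_integrand h₂ x t)

lemma enorm_midpointExt_le (k : ℝ × ℝ → ℂ) (x t : ℝ) : ‖midpointExt k x t‖ₑ ≤ ∫⁻ z, ‖k z‖ₑ :=
  (enorm_integral_le_lintegral_enorm _).trans_eq (by simp only [enorm_fourierChar_mul])

lemma midpointExt_eq_two_mul_of_even (hk : Integrable k) (heven : ∀ m h, k (m, -h) = k (m, h))
    (x t : ℝ) : midpointExt k x t = 2 * midpointExt ({z | 0 < z.2}.indicator k) x t := by
  have hpos : MeasurableSet {z : ℝ × ℝ | 0 < z.2} := measurableSet_lt (by fun_prop) (by fun_prop)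
  have hint := integrable_midpointExt_integrand hk x t
  have hint_pos := integrable_midpointExt_integrand (hk.indicator hpos) x t
  rw [Measure.volume_eq_prod] at hint hint_pos
  rw [midpointExt, midpointExt, Measure.volume_eq_prod, integral_prod _ hint,
    integral_prod _ hint_pos, ← integral_const_mul]
  refine integral_congr_ae ?_
  filter_upwards [hint.prod_right_ae] with m hm
  rw [integral_eq_two_mul_integral_Ioi_of_even hm (by simp [heven]),
    ← integral_indicator measurableSet_Ioi]
  congr with h
  by_cases hh : 0 < h <;> simp [indicator, hh]

/-- The integral over the difference `h` alone in `midpointExt`, at time `t` and midpoint `m`. -/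
noncomputable def midpointSlice (k : ℝ × ℝ → ℂ) (t m : ℝ) : ℂ :=
  ∫ h, (𝐞 (t * (2 * m ^ 2 + h ^ 2 / 2)) : ℂ) * k (m, h)

lemma measurable_midpointSlice (hk : Measurable k) :
    Measurable fun p : ℝ × ℝ ↦ midpointSlice k p.1 p.2 :=
  StronglyMeasurable.measurable <| StronglyMeasurable.integral_prod_right'
    (f := fun q : (ℝ × ℝ) × ℝ ↦
      (𝐞 (q.1.1 * (2 * q.1.2 ^ 2 + q.2 ^ 2 / 2)) : ℂ) * k (q.1.2, q.2))
    (Measurable.stronglyMeasurable (by fun_prop))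

lemma integrable_midpointSlice (hk : Integrable k) (t : ℝ) : Integrable (midpointSlice k t) :=
  (integrable_fourierChar_mul (θ := fun z : ℝ × ℝ ↦ t * (2 * z.1 ^ 2 + z.2 ^ 2 / 2)) hk
    (by fun_prop)).integral_prod_left

lemma midpointExt_eq_integral_midpointSlice (hk : Integrable k) (x t : ℝ) :
    midpointExt k x t = ∫ m, (𝐞 (x * (2 * m)) : ℂ) * midpointSlice k t m := by
  rw [midpointExt, Measure.volume_eq_prod,
    integral_prod _ (integrable_midpointExt_integrand hk x t)]
  congr with m
  simp_rw [midpointSlice, ← integral_const_mul, coe_fourierChar_add, mul_assoc]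

lemma lintegral_enorm_sq_midpointExt_le_midpointSlice (hk : Integrable k) (t : ℝ) :
    ∫⁻ x : ℝ, ‖midpointExt k x t‖ₑ ^ 2 ≤ ∫⁻ m, ‖midpointSlice k t m‖ₑ ^ 2 := by
  simp_rw [midpointExt_eq_integral_midpointSlice hk, ← setIntegral_univ (μ := volume)]
  refine (lintegral_enorm_sq_setIntegral_fourierChar_comp_le (φ' := fun _ ↦ 2) .univ
    (fun m _ ↦ by simpa using (hasDerivAt_id m).const_mul 2)
    (mul_right_injective₀ two_ne_zero).injOn (by simp)
    (integrable_midpointSlice hk t).integrableOn).trans ?_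
  rw [Measure.restrict_univ]
  refine lintegral_mono fun m ↦ mul_le_of_le_one_right' ?_
  rw [ENNReal.ofReal_le_one]
  norm_num

lemma lintegral_enorm_sq_midpointSlice_le (hpos : ∀ z : ℝ × ℝ, z.2 ≤ 0 → k z = 0) {m : ℝ}
    (hm : Integrable fun h ↦ k (m, h)) : ∫⁻ t : ℝ, ‖midpointSlice k t m‖ₑ ^ 2
      ≤ ∫⁻ h in Ioi 0, ‖k (m, h)‖ₑ ^ 2 * ENNReal.ofReal h⁻¹ := by
  have hslice (t : ℝ) : ‖midpointSlice k t m‖ₑ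
      = ‖∫ h in Ioi 0, (𝐞 (t * (h ^ 2 / 2)) : ℂ) * k (m, h)‖ₑ := by
    simp_rw [midpointSlice, mul_add, coe_fourierChar_add, mul_assoc]
    rw [integral_const_mul, enorm_fourierChar_mul,
      setIntegral_eq_integral_of_forall_compl_eq_zero fun h hh ↦ ?_]
    rw [hpos (m, h) (not_lt.1 hh), mul_zero]
  simp_rw [hslice]
  refine (lintegral_enorm_sq_setIntegral_fourierChar_comp_le (φ' := id) measurableSet_Ioi
    (fun h _ ↦ by simpa using ((hasDerivAt_pow 2 h).div_const 2).hasDerivWithinAt)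
    (fun h hh h' hh' heq ↦ ?_) (fun h hh ↦ ne_of_gt hh) hm.integrableOn).trans_eq ?_
  · exact (pow_left_inj₀ (le_of_lt hh) (le_of_lt hh') two_ne_zero).1 (by linarith)
  · exact setLIntegral_congr_fun measurableSet_Ioi fun h hh ↦ by
      rw [id, abs_of_pos (mem_Ioi.1 hh)]

lemma lintegral_enorm_sq_midpointExt_le (hkm : Measurable k) (hk : Integrable k)
    (hpos : ∀ z : ℝ × ℝ, z.2 ≤ 0 → k z = 0) :
    ∫⁻ t : ℝ, ∫⁻ x : ℝ, ‖midpointExt k x t‖ₑ ^ 2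
      ≤ ∫⁻ h : ℝ in Ioi 0, (∫⁻ m, ‖k (m, h)‖ₑ ^ 2) * ENNReal.ofReal h⁻¹ :=
  calc ∫⁻ t : ℝ, ∫⁻ x : ℝ, ‖midpointExt k x t‖ₑ ^ 2
      ≤ ∫⁻ t, ∫⁻ m, ‖midpointSlice k t m‖ₑ ^ 2 :=
        lintegral_mono (lintegral_enorm_sq_midpointExt_le_midpointSlice hk)
    _ = ∫⁻ m, ∫⁻ t, ‖midpointSlice k t m‖ₑ ^ 2 :=
        lintegral_lintegral_swap ((measurable_midpointSlice hkm).enorm.pow_const 2).aemeasurable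
    _ ≤ ∫⁻ m, ∫⁻ h in Ioi 0, ‖k (m, h)‖ₑ ^ 2 * ENNReal.ofReal h⁻¹ := by
        rw [Measure.volume_eq_prod] at hk
        exact lintegral_mono_ae (hk.prod_right_ae.mono fun m hm ↦
          lintegral_enorm_sq_midpointSlice_le hpos hm)
    _ = ∫⁻ h in Ioi 0, (∫⁻ m, ‖k (m, h)‖ₑ ^ 2) * ENNReal.ofReal h⁻¹ := by
        rw [lintegral_lintegral_swap (Measurable.aemeasurable (by fun_prop))]
        simp_rw [lintegral_mul_const' _ _ ENNReal.ofReal_ne_top]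

/-- The part of `g ⊗ g` at differences `h > δ`. -/
noncomputable def farProd (g : ℝ → ℂ) (δ : ℝ) : ℝ × ℝ → ℂ :=
  {z | δ < z.2}.indicator (midpointProd g)

lemma measurableSet_lt_snd (δ : ℝ) : MeasurableSet {z : ℝ × ℝ | δ < z.2} :=
  measurableSet_lt measurable_const measurable_snd

lemma lintegral_enorm_midpointProd_le (hg : Measurable g) (h : ℝ) :
    ∫⁻ m, ‖midpointProd g (m, h)‖ₑ ≤ 2 * ∫⁻ ξ, ‖g ξ‖ₑ ^ 2 := by
  have hmul (x y : ℝ≥0∞) : x * y ≤ x ^ 2 + y ^ 2 := by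
    rcases le_total x y with hxy | hyx
    · exact le_add_left ((mul_le_mul_left hxy y).trans_eq (sq y).symm)
    · exact le_add_right ((mul_le_mul_right hyx x).trans_eq (sq x).symm)
  calc ∫⁻ m, ‖midpointProd g (m, h)‖ₑ
      ≤ ∫⁻ m, (‖g (m + h / 2)‖ₑ ^ 2 + ‖g (m - h / 2)‖ₑ ^ 2) :=
        lintegral_mono fun m ↦ by rw [midpointProd, enorm_mul]; exact hmul _ _
    _ = 2 * ∫⁻ ξ, ‖g ξ‖ₑ ^ 2 := by
        rw [lintegral_add_left (by fun_prop),
          lintegral_add_right_eq_self (fun ξ ↦ ‖g ξ‖ₑ ^ 2),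
          lintegral_sub_right_eq_self (fun ξ ↦ ‖g ξ‖ₑ ^ 2), two_mul]

lemma lintegral_enorm_midpointProd_near_le (hg : Measurable g) (δ : ℝ) :
    ∫⁻ z, ‖({z | 0 < z.2} \ {z | δ < z.2}).indicator (midpointProd g) z‖ₑ
      ≤ 2 * ENNReal.ofReal δ * ∫⁻ ξ, ‖g ξ‖ₑ ^ 2 := by
  have hset : {z : ℝ × ℝ | 0 < z.2} \ {z | δ < z.2} = univ ×ˢ Ioc 0 δ := by
    ext z
    simp
  simp_rw [hset, enorm_indicator_eq_indicator_enorm]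
  rw [lintegral_indicator (MeasurableSet.univ.prod measurableSet_Ioc), Measure.volume_eq_prod,
    ← Measure.prod_restrict, Measure.restrict_univ,
    lintegral_prod_symm' _ (measurable_midpointProd hg).enorm]
  calc ∫⁻ h in Ioc 0 δ, ∫⁻ m, ‖midpointProd g (m, h)‖ₑ
      ≤ ∫⁻ h in Ioc 0 δ, 2 * ∫⁻ ξ, ‖g ξ‖ₑ ^ 2 :=
        lintegral_mono fun h ↦ lintegral_enorm_midpointProd_le hg h
    _ = 2 * ENNReal.ofReal δ * ∫⁻ ξ, ‖g ξ‖ₑ ^ 2 := by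
        rw [setLIntegral_const, Real.volume_Ioc, sub_zero]
        ring

lemma enorm_parabolaExt_sq_le (hg : Measurable g) (hgi : Integrable g) {δ : ℝ} (hδ : 0 ≤ δ)
    (x t : ℝ) : ‖parabolaExt g x t‖ₑ ^ 2
      ≤ 4 * ENNReal.ofReal δ * (∫⁻ ξ, ‖g ξ‖ₑ ^ 2) + 2 * ‖midpointExt (farProd g δ) x t‖ₑ := by
  have hprod := integrable_midpointProd hgi
  have hsplit : {z : ℝ × ℝ | 0 < z.2}.indicator (midpointProd g)
      = ({z | 0 < z.2} \ {z | δ < z.2}).indicator (midpointProd g) + farProd g δ := by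
    have hsub : {z : ℝ × ℝ | δ < z.2} ⊆ {z | 0 < z.2} := fun z hz ↦ hδ.trans_lt hz
    rw [farProd, indicator_sdiff hsub, sub_add_cancel]
  rw [← enorm_pow, parabolaExt_sq, midpointExt_eq_two_mul_of_even hprod (midpointProd_neg g),
    hsplit, midpointExt_add (k₂ := farProd g δ)
      (hprod.indicator ((measurableSet_lt_snd 0).diff (measurableSet_lt_snd δ)))
      (hprod.indicator (measurableSet_lt_snd δ)), enorm_mul]
  have htwo : ‖(2 : ℂ)‖ₑ = 2 := by simp [← ofReal_norm]
  calc ‖(2 : ℂ)‖ₑ * ‖midpointExt _ x t + midpointExt (farProd g δ) x t‖ₑ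
      ≤ 2 * (2 * ENNReal.ofReal δ * (∫⁻ ξ, ‖g ξ‖ₑ ^ 2) + ‖midpointExt (farProd g δ) x t‖ₑ) := by
        rw [htwo]
        gcongr
        refine (enorm_add_le _ _).trans ?_
        gcongr
        exact (enorm_midpointExt_le _ x t).trans (lintegral_enorm_midpointProd_near_le hg δ)
    _ = _ := by ring

lemma lintegral_enorm_sq_midpointExt_farProd_le (hg : Measurable g) (hgi : Integrable g) {δ : ℝ}
    (hδ : 0 ≤ δ) : ∫⁻ t : ℝ, ∫⁻ x : ℝ, ‖midpointExt (farProd g δ) x t‖ₑ ^ 2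
      ≤ ∫⁻ h in Ioi δ, autocorr g h * ENNReal.ofReal h⁻¹ := by
  refine (lintegral_enorm_sq_midpointExt_le
    ((measurable_midpointProd hg).indicator (measurableSet_lt_snd δ))
    ((integrable_midpointProd hgi).indicator (measurableSet_lt_snd δ))
    fun z hz ↦ indicator_of_notMem (s := {z : ℝ × ℝ | δ < z.2})
      (fun h ↦ (hδ.trans_lt h).not_ge hz) _).trans ?_
  rw [← lintegral_indicator (measurableSet_Ioi (a := δ))]
  refine (setLIntegral_le_lintegral (Ioi 0) _).trans (lintegral_mono fun h ↦ ?_)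
  by_cases hh : δ < h <;> simp [indicator, hh, autocorr]

lemma measurable_autocorr (hg : Measurable g) : Measurable (autocorr g) :=
  Measurable.lintegral_prod_left' (f := fun z ↦ ‖midpointProd g z‖ₑ ^ 2)
    ((measurable_midpointProd hg).enorm.pow_const 2)

lemma autocorr_neg (g : ℝ → ℂ) (h : ℝ) : autocorr g (-h) = autocorr g h := by
  simp only [autocorr, midpointProd_neg]

lemma autocorr_le (hg1 : ∀ ξ, ‖g ξ‖ₑ ≤ 1) (h : ℝ) : autocorr g h ≤ ∫⁻ ξ, ‖g ξ‖ₑ ^ 2 := by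
  rw [← lintegral_add_right_eq_self (fun ξ ↦ ‖g ξ‖ₑ ^ 2) (h / 2)]
  refine lintegral_mono fun m ↦ ?_
  simp only [midpointProd, enorm_mul, mul_pow]
  exact mul_le_of_le_one_right' (pow_le_one' (hg1 _) 2)

lemma two_mul_lintegral_autocorr (hg : Measurable g) :
    2 * ∫⁻ h in Ioi 0, autocorr g h = (∫⁻ ξ, ‖g ξ‖ₑ ^ 2) ^ 2 := by
  have hsq : AEMeasurable (fun ξ ↦ ‖g ξ‖ₑ ^ 2) := (hg.enorm.pow_const 2).aemeasurable
  calc 2 * ∫⁻ h in Ioi 0, autocorr g h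
      = ∫⁻ h, autocorr g h := (lintegral_eq_two_mul_lintegral_Ioi_of_even (autocorr_neg g)).symm
    _ = ∫⁻ z, ‖midpointProd g z‖ₑ ^ 2 := by
        rw [Measure.volume_eq_prod,
          lintegral_prod_symm' _ ((measurable_midpointProd hg).enorm.pow_const 2)]
        rfl
    _ = ∫⁻ z : ℝ × ℝ, ‖g z.1 * g z.2‖ₑ ^ 2 :=
        measurePreserving_midpointDiff.lintegral_comp_emb measurableEmbedding_midpointDiff
          fun z ↦ ‖g z.1 * g z.2‖ₑ ^ 2
    _ = (∫⁻ ξ, ‖g ξ‖ₑ ^ 2) ^ 2 := by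
        simp_rw [enorm_mul, mul_pow]
        rw [Measure.volume_eq_prod, lintegral_prod_mul hsq hsq, sq]

end Parabola

section LayerCake

lemma lintegral_Ioo_rpow {r c : ℝ} (hr : -1 < r) (hc : 0 ≤ c) :
    ∫⁻ t in Ioo 0 c, ENNReal.ofReal (t ^ r) = ENNReal.ofReal (c ^ (r + 1) / (r + 1)) := by
  rw [setLIntegral_congr Ioo_ae_eq_Ioc, ← ofReal_integral_eq_lintegral_ofReal]
  · rw [← intervalIntegral.integral_of_le hc, integral_rpow (.inl hr),
      Real.zero_rpow (by linarith), sub_zero]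
  · exact (intervalIntegrable_iff_integrableOn_Ioc_of_le hc).1
      (intervalIntegral.intervalIntegrable_rpow' hr)
  · filter_upwards [ae_restrict_mem measurableSet_Ioc] with t ht
    exact Real.rpow_nonneg ht.1.le _

lemma lintegral_rpow_mul_lintegral_Ioi_div {r c : ℝ} (hr : -1 < r) (hc : 0 < c) {A : ℝ → ℝ≥0∞}
    (hA : Measurable A) :
    ∫⁻ t in Ioi 0, ENNReal.ofReal (t ^ r) * ∫⁻ h in Ioi (t / c), A h
      = ∫⁻ h in Ioi 0, ENNReal.ofReal ((c * h) ^ (r + 1) / (r + 1)) * A h := by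
  set G : ℝ × ℝ → ℝ≥0∞ := {z | 0 < z.1 ∧ z.1 < c * z.2}.indicator
    fun z ↦ ENNReal.ofReal (z.1 ^ r) * A z.2
  have hG : Measurable G := by
    refine Measurable.indicator (by fun_prop) (MeasurableSet.inter (s₁ := {z : ℝ × ℝ | 0 < z.1})
      (s₂ := {z | z.1 < c * z.2}) ?_ ?_)
    · exact measurableSet_lt (by fun_prop) (by fun_prop)
    · exact measurableSet_lt (by fun_prop) (by fun_prop)
  have hleft : ∫⁻ t in Ioi 0, ENNReal.ofReal (t ^ r) * ∫⁻ h in Ioi (t / c), A h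
      = ∫⁻ t, ∫⁻ h, G (t, h) := by
    rw [← lintegral_indicator measurableSet_Ioi]
    congr with t
    by_cases ht : 0 < t
    · rw [indicator_of_mem (mem_Ioi.2 ht), ← lintegral_const_mul _ hA,
        ← lintegral_indicator measurableSet_Ioi]
      congr with h
      simp [G, indicator, ht, div_lt_iff₀' hc]
    · simp [G, indicator, ht]
  have hright : ∫⁻ h in Ioi 0, ENNReal.ofReal ((c * h) ^ (r + 1) / (r + 1)) * A h
      = ∫⁻ h, ∫⁻ t, G (t, h) := by
    rw [← lintegral_indicator measurableSet_Ioi]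
    congr with h
    by_cases hh : 0 < h
    · rw [indicator_of_mem (mem_Ioi.2 hh), ← lintegral_Ioo_rpow hr (by positivity),
        ← lintegral_mul_const _ (by fun_prop), ← lintegral_indicator measurableSet_Ioo]
      rfl
    · have hempty (t : ℝ) (ht : 0 < t) : ¬ t < c * h := fun hlt ↦
        (ht.trans hlt).not_ge (mul_nonpos_of_nonneg_of_nonpos hc.le (not_lt.1 hh))
      have hzero (t : ℝ) : G (t, h) = 0 :=
        indicator_of_notMem (s := {z : ℝ × ℝ | 0 < z.1 ∧ z.1 < c * z.2})
          (fun hz ↦ hempty t hz.1 hz.2) _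
      simp [hzero, hh]
  rw [hleft, hright, lintegral_lintegral_swap (f := fun t h ↦ G (t, h)) hG.aemeasurable]

lemma lintegral_rpow_le_of_meas_lt_le {α : Type*} [MeasurableSpace α] {μ : Measure α} {F : α → ℝ}
    (hF : 0 ≤ F) (hFm : AEMeasurable F μ) {A : ℝ → ℝ≥0∞} (hA : Measurable A) {K c ρ : ℝ}
    (hK : 0 ≤ K) (hc : 0 < c) (hρ : 2 < ρ)
    (hlevel : ∀ t, 0 < t → μ {z | t < F z}
      ≤ ENNReal.ofReal (K / t ^ 2) * ∫⁻ h in Ioi (t / c), A h) :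
    ∫⁻ z, ENNReal.ofReal (F z ^ ρ) ∂μ ≤ ENNReal.ofReal (ρ * K * c ^ (ρ - 2) / (ρ - 2))
        * ∫⁻ h in Ioi 0, ENNReal.ofReal (h ^ (ρ - 2)) * A h := by
  have hexp (t : ℝ) (ht : 0 < t) : K / t ^ 2 * t ^ (ρ - 1) = K * t ^ (ρ - 3) := by
    rw [show ρ - 1 = (ρ - 3) + (2 : ℕ) by push_cast; ring, Real.rpow_add_natCast ht.ne']
    field_simp
  have hconst (h : ℝ) (hh : 0 < h) :
      ρ * K * ((c * h) ^ (ρ - 3 + 1) / (ρ - 3 + 1))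
        = ρ * K * c ^ (ρ - 2) / (ρ - 2) * h ^ (ρ - 2) := by
    rw [show ρ - 3 + 1 = ρ - 2 by ring, Real.mul_rpow hc.le hh.le]
    ring
  have hρ2 : 0 < ρ - 2 := by linarith
  calc ∫⁻ z, ENNReal.ofReal (F z ^ ρ) ∂μ
      = ENNReal.ofReal ρ * ∫⁻ t in Ioi 0, μ {z | t < F z} * ENNReal.ofReal (t ^ (ρ - 1)) :=
        lintegral_rpow_eq_lintegral_meas_lt_mul μ (.of_forall hF) hFm (by linarith)
    _ ≤ ENNReal.ofReal ρ * ∫⁻ t in Ioi 0, ENNReal.ofReal K *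
          (ENNReal.ofReal (t ^ (ρ - 3)) * ∫⁻ h in Ioi (t / c), A h) := by
        gcongr ENNReal.ofReal ρ * ?_
        refine setLIntegral_mono' measurableSet_Ioi fun t ht ↦ ?_
        have ht' : 0 < t := ht
        refine (mul_le_mul_left (hlevel t ht') _).trans_eq ?_
        rw [mul_right_comm, ← ENNReal.ofReal_mul (by positivity), hexp t ht',
          ENNReal.ofReal_mul hK, mul_assoc]
    _ = ∫⁻ h in Ioi 0, ENNReal.ofReal (ρ * K) *
          (ENNReal.ofReal ((c * h) ^ (ρ - 3 + 1) / (ρ - 3 + 1)) * A h) := by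
        rw [lintegral_const_mul' _ _ ENNReal.ofReal_ne_top,
          lintegral_rpow_mul_lintegral_Ioi_div (by linarith) hc hA,
          lintegral_const_mul' _ _ ENNReal.ofReal_ne_top, ← mul_assoc,
          ← ENNReal.ofReal_mul (by linarith)]
    _ = _ := by
        rw [← lintegral_const_mul' _ _ ENNReal.ofReal_ne_top]
        refine setLIntegral_congr_fun measurableSet_Ioi fun h hh ↦ ?_
        have hh' : 0 < h := hh
        rw [← mul_assoc, ← mul_assoc, ← ENNReal.ofReal_mul (by positivity),
          ← ENNReal.ofReal_mul (by positivity), hconst h hh']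

end LayerCake

section MassAwayFromZero

variable {A : ℝ → ℝ≥0∞} {n s : ℝ}

lemma sq_le_four_mul_lintegral_Ici (hn : 0 < n) (hA : ∀ h, A h ≤ ENNReal.ofReal n)
    (hmass : ENNReal.ofReal n ^ 2 ≤ 2 * ∫⁻ h in Ioi 0, A h) :
    ENNReal.ofReal n ^ 2 ≤ 4 * ∫⁻ h in Ici (n / 4), A h := by
  have hn4 : 0 < n / 4 := by positivity
  have hnear : ∫⁻ h in Ioo 0 (n / 4), A h ≤ ENNReal.ofReal (n ^ 2 / 4) := by
    refine (lintegral_mono fun h ↦ hA h).trans_eq ?_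
    rw [setLIntegral_const, Real.volume_Ioo, ← ENNReal.ofReal_mul hn.le]
    ring_nf
  have hhalf : ENNReal.ofReal n ^ 2
      = 2 * ENNReal.ofReal (n ^ 2 / 4) + 2 * ENNReal.ofReal (n ^ 2 / 4) := by
    rw [← ENNReal.ofReal_pow hn.le, show n ^ 2 = 4 * (n ^ 2 / 4) by ring,
      ENNReal.ofReal_mul (by norm_num), ← add_mul]
    norm_num
  rw [← Ioo_union_Ici_eq_Ioi hn4, lintegral_union measurableSet_Ici
    (disjoint_left.2 fun h hlt hge ↦ hlt.2.not_ge hge), mul_add] at hmass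
  have hfar : 2 * ENNReal.ofReal (n ^ 2 / 4) ≤ 2 * ∫⁻ h in Ici (n / 4), A h := by
    rw [← ENNReal.add_le_add_iff_left (a := 2 * ENNReal.ofReal (n ^ 2 / 4)) (by finiteness),
      ← hhalf]
    exact hmass.trans (by gcongr)
  calc ENNReal.ofReal n ^ 2 ≤ 2 * (∫⁻ h in Ici (n / 4), A h) + 2 * ∫⁻ h in Ici (n / 4), A h :=
        hhalf.trans_le (by gcongr)
    _ = 4 * ∫⁻ h in Ici (n / 4), A h := by ring

lemma ofReal_rpow_le_lintegral_mul_rpow (hs : 1 / 2 ≤ s) (hn : 0 < n) (hAm : Measurable A)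
    (hA : ∀ h, A h ≤ ENNReal.ofReal n)
    (hmass : ENNReal.ofReal n ^ 2 ≤ 2 * ∫⁻ h in Ioi 0, A h) :
    ENNReal.ofReal (n ^ (2 * s + 1)) ≤ ENNReal.ofReal (4 ^ (2 * s))
      * ∫⁻ h in Ioi 0, ENNReal.ofReal (h ^ (2 * s - 1)) * A h := by
  have hn4 : 0 < n / 4 := by positivity
  have hexp : n ^ (2 * s + 1) = 4 ^ (2 * s - 1) * (n / 4) ^ (2 * s - 1) * n ^ 2 := by
    rw [← Real.mul_rpow (by norm_num) hn4.le, mul_div_cancel₀ _ (by norm_num),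
      ← Real.rpow_add_natCast hn.ne']
    ring_nf
  have hconst : (4 : ℝ) ^ (2 * s - 1) * 4 = 4 ^ (2 * s) := by
    rw [← Real.rpow_add_one (by norm_num)]
    ring_nf
  have hmono (h : ℝ) (hh : h ∈ Ici (n / 4)) : (n / 4) ^ (2 * s - 1) ≤ h ^ (2 * s - 1) :=
    Real.rpow_le_rpow hn4.le hh (by linarith)
  calc ENNReal.ofReal (n ^ (2 * s + 1))
      ≤ ENNReal.ofReal (4 ^ (2 * s - 1) * (n / 4) ^ (2 * s - 1))
          * (4 * ∫⁻ h in Ici (n / 4), A h) := by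
        rw [hexp, ENNReal.ofReal_mul (by positivity), ENNReal.ofReal_pow hn.le]
        gcongr
        exact sq_le_four_mul_lintegral_Ici hn hA hmass
    _ = ENNReal.ofReal (4 ^ (2 * s))
          * ∫⁻ h in Ici (n / 4), ENNReal.ofReal ((n / 4) ^ (2 * s - 1)) * A h := by
        rw [lintegral_const_mul _ hAm, ← hconst, ENNReal.ofReal_mul (by positivity),
          ENNReal.ofReal_mul (by positivity), ENNReal.ofReal_ofNat]
        ring
    _ ≤ ENNReal.ofReal (4 ^ (2 * s))
          * ∫⁻ h in Ici (n / 4), ENNReal.ofReal (h ^ (2 * s - 1)) * A h := by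
        gcongr ENNReal.ofReal _ * ?_
        exact setLIntegral_mono' measurableSet_Ici fun h hh ↦
          mul_le_mul_left (ENNReal.ofReal_le_ofReal (hmono h hh)) _
    _ ≤ _ := by
        gcongr ENNReal.ofReal _ * ?_
        exact lintegral_mono_set (Ici_subset_Ioi.2 hn4)

lemma lintegral_Ioo_mul_rpow_le (hs : 0 < s) (hn : 0 < n) (hA : ∀ h, A h ≤ ENNReal.ofReal n) :
    ∫⁻ h in Ioo 0 (n / 4), ENNReal.ofReal (n ^ s * h ^ (s - 1)) * A h
      ≤ ENNReal.ofReal s⁻¹ * ENNReal.ofReal (n ^ (2 * s + 1)) := by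
  have hexp : n * n ^ s * ((n / 4) ^ (s - 1 + 1) / (s - 1 + 1)) ≤ s⁻¹ * n ^ (2 * s + 1) := by
    have hle : (n / 4) ^ s ≤ n ^ s := Real.rpow_le_rpow (by positivity) (by linarith) hs.le
    calc n * n ^ s * ((n / 4) ^ (s - 1 + 1) / (s - 1 + 1))
        = s⁻¹ * (n * n ^ s * (n / 4) ^ s) := by rw [sub_add_cancel]; ring
      _ ≤ s⁻¹ * (n * n ^ s * n ^ s) := by gcongr
      _ = s⁻¹ * n ^ (2 * s + 1) := by
          rw [two_mul, Real.rpow_add_one hn.ne', Real.rpow_add hn]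
          ring
  calc ∫⁻ h in Ioo 0 (n / 4), ENNReal.ofReal (n ^ s * h ^ (s - 1)) * A h
      ≤ ∫⁻ h in Ioo 0 (n / 4), ENNReal.ofReal (n * n ^ s) * ENNReal.ofReal (h ^ (s - 1)) :=
        lintegral_mono fun h ↦ by
          refine (mul_le_mul_right (hA h) _).trans_eq ?_
          rw [ENNReal.ofReal_mul (by positivity), ENNReal.ofReal_mul hn.le]
          ring
    _ = ENNReal.ofReal (n * n ^ s * ((n / 4) ^ (s - 1 + 1) / (s - 1 + 1))) := by
        rw [lintegral_const_mul' _ _ ENNReal.ofReal_ne_top,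
          lintegral_Ioo_rpow (by linarith) (by positivity), ← ENNReal.ofReal_mul (by positivity)]
    _ ≤ _ := (ENNReal.ofReal_le_ofReal hexp).trans_eq (ENNReal.ofReal_mul (by positivity))

lemma lintegral_mul_rpow_le (hs : 1 / 2 ≤ s) (hn : 0 < n) (hAm : Measurable A)
    (hA : ∀ h, A h ≤ ENNReal.ofReal n)
    (hmass : ENNReal.ofReal n ^ 2 ≤ 2 * ∫⁻ h in Ioi 0, A h) :
    ∫⁻ h in Ioi 0, ENNReal.ofReal (n ^ s * h ^ (s - 1)) * A h
      ≤ (ENNReal.ofReal s⁻¹ * ENNReal.ofReal (4 ^ (2 * s)) + ENNReal.ofReal (4 ^ s))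
        * ∫⁻ h in Ioi 0, ENNReal.ofReal (h ^ (2 * s - 1)) * A h := by
  have hn4 : 0 < n / 4 := by positivity
  have hs0 : 0 < s := by linarith
  have hpoint (h : ℝ) (hh : h ∈ Ici (n / 4)) : n ^ s * h ^ (s - 1) ≤ 4 ^ s * h ^ (2 * s - 1) := by
    have hpos : 0 < h := hn4.trans_le hh
    have hle : n ≤ 4 * h := by linarith [mem_Ici.1 hh]
    calc n ^ s * h ^ (s - 1) ≤ (4 * h) ^ s * h ^ (s - 1) := by gcongr
      _ = 4 ^ s * h ^ (2 * s - 1) := by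
        rw [Real.mul_rpow (by norm_num) hpos.le, mul_assoc, ← Real.rpow_add hpos]
        ring_nf
  have hfar : ∫⁻ h in Ici (n / 4), ENNReal.ofReal (n ^ s * h ^ (s - 1)) * A h
      ≤ ENNReal.ofReal (4 ^ s) * ∫⁻ h in Ioi 0, ENNReal.ofReal (h ^ (2 * s - 1)) * A h := by
    rw [← lintegral_const_mul' _ _ ENNReal.ofReal_ne_top]
    refine (setLIntegral_mono' measurableSet_Ici fun h hh ↦ ?_).trans
      (lintegral_mono_set (Ici_subset_Ioi.2 hn4))
    rw [← mul_assoc, ← ENNReal.ofReal_mul (by positivity)]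
    exact mul_le_mul_left (ENNReal.ofReal_le_ofReal (hpoint h hh)) _
  rw [← Ioo_union_Ici_eq_Ioi hn4, lintegral_union measurableSet_Ici
    (disjoint_left.2 fun h hlt hge ↦ hlt.2.not_ge hge), Ioo_union_Ici_eq_Ioi hn4, add_mul,
    mul_assoc]
  gcongr
  exact (lintegral_Ioo_mul_rpow_le hs0 hn hA).trans
    (by gcongr; exact ofReal_rpow_le_lintegral_mul_rpow hs hn hAm hA hmass)

end MassAwayFromZero

section ParabolaEstimate

variable {g : ℝ → ℂ} {n t : ℝ}

lemma measurable_parabolaExt (hg : Measurable g) :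
    Measurable fun z : ℝ × ℝ ↦ parabolaExt g z.2 z.1 :=
  StronglyMeasurable.measurable <| StronglyMeasurable.integral_prod_right'
    (f := fun q : (ℝ × ℝ) × ℝ ↦ (𝐞 (q.1.2 * q.2 + q.1.1 * q.2 ^ 2) : ℂ) * g q.2)
    (Measurable.stronglyMeasurable (by fun_prop))

lemma measurable_midpointExt {k : ℝ × ℝ → ℂ} (hk : Measurable k) :
    Measurable fun z : ℝ × ℝ ↦ midpointExt k z.2 z.1 :=
  StronglyMeasurable.measurable <| StronglyMeasurable.integral_prod_right'
    (f := fun q : (ℝ × ℝ) × ℝ × ℝ ↦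
      (𝐞 (q.1.2 * (2 * q.2.1) + q.1.1 * (2 * q.2.1 ^ 2 + q.2.2 ^ 2 / 2)) : ℂ) * k q.2)
    (Measurable.stronglyMeasurable (by fun_prop))

lemma parabolaExt_eq_zero (hg : g =ᵐ[volume] 0) (x t : ℝ) : parabolaExt g x t = 0 :=
  integral_eq_zero_of_ae (hg.mono fun ξ hξ ↦ by simp [hξ])

/-- With `δ = t / (8 n)` the near part of the product contributes at most `t / 2`. -/
lemma le_norm_midpointExt_farProd_of_lt (hg : Measurable g) (hgi : Integrable g) (hn : 0 < n)
    (hgn : ∫⁻ ξ, ‖g ξ‖ₑ ^ 2 = ENNReal.ofReal n) (ht : 0 < t) {x y : ℝ}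
    (hlt : t < ‖parabolaExt g x y‖ ^ 2) : t / 4 ≤ ‖midpointExt (farProd g (t / (8 * n))) x y‖ := by
  have hδ : 0 ≤ t / (8 * n) := by positivity
  have hsplit := enorm_parabolaExt_sq_le hg hgi hδ x y
  rw [hgn, ← ofReal_norm, ← ofReal_norm, ← ENNReal.ofReal_pow (norm_nonneg _),
    ← ENNReal.ofReal_ofNat 4, ← ENNReal.ofReal_ofNat 2, ← ENNReal.ofReal_mul (by norm_num),
    ← ENNReal.ofReal_mul (by positivity), ← ENNReal.ofReal_mul (by norm_num),
    ← ENNReal.ofReal_add (by positivity) (by positivity),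
    ENNReal.ofReal_le_ofReal_iff (by positivity)] at hsplit
  have hnear : 4 * (t / (8 * n)) * n = t / 2 := by
    field_simp
    norm_num
  linarith

lemma meas_lt_norm_parabolaExt_sq_le (hg : Measurable g) (hgi : Integrable g) (hn : 0 < n)
    (hgn : ∫⁻ ξ, ‖g ξ‖ₑ ^ 2 = ENNReal.ofReal n) (ht : 0 < t) :
    volume {z : ℝ × ℝ | t < ‖parabolaExt g z.2 z.1‖ ^ 2} ≤ ENNReal.ofReal (16 / t ^ 2)
      * ∫⁻ h in Ioi (t / (8 * n)), autocorr g h * ENNReal.ofReal h⁻¹ := by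
  set far : ℝ × ℝ → ℂ := fun z ↦ midpointExt (farProd g (t / (8 * n))) z.2 z.1
  have hfar : Measurable far :=
    measurable_midpointExt ((measurable_midpointProd hg).indicator (measurableSet_lt_snd _))
  have hfar_sq : Measurable fun z ↦ ‖far z‖ₑ ^ 2 := hfar.enorm.pow_const 2
  have hsub : {z : ℝ × ℝ | t < ‖parabolaExt g z.2 z.1‖ ^ 2}
      ⊆ {z | ENNReal.ofReal (t ^ 2 / 16) ≤ ‖far z‖ₑ ^ 2} := fun z hz ↦ by
    have hz' := le_norm_midpointExt_farProd_of_lt hg hgi hn hgn ht hz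
    rw [mem_ofPred_eq, ← ofReal_norm, ← ENNReal.ofReal_pow (norm_nonneg _),
      show t ^ 2 / 16 = (t / 4) ^ 2 by ring]
    gcongr
  calc volume {z : ℝ × ℝ | t < ‖parabolaExt g z.2 z.1‖ ^ 2}
      ≤ (∫⁻ z, ‖far z‖ₑ ^ 2) / ENNReal.ofReal (t ^ 2 / 16) :=
        (measure_mono hsub).trans (meas_ge_le_lintegral_div hfar_sq.aemeasurable
          (by simpa using by positivity) ENNReal.ofReal_ne_top)
    _ = ENNReal.ofReal (16 / t ^ 2) * ∫⁻ t, ∫⁻ x, ‖far (t, x)‖ₑ ^ 2 := by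
        rw [Measure.volume_eq_prod, lintegral_prod _ hfar_sq.aemeasurable, div_eq_mul_inv,
          ← ENNReal.ofReal_inv_of_pos (by positivity), inv_div, mul_comm]
    _ ≤ _ := by
        gcongr ENNReal.ofReal _ * ?_
        exact lintegral_enorm_sq_midpointExt_farProd_le hg hgi (by positivity)

lemma lintegral_norm_parabolaExt_sq_rpow_le {ρ : ℝ} (hρ : 2 < ρ) (hg : Measurable g)
    (hgi : Integrable g) (hn : 0 < n) (hgn : ∫⁻ ξ, ‖g ξ‖ₑ ^ 2 = ENNReal.ofReal n) :
    ∫⁻ z : ℝ × ℝ, ENNReal.ofReal ((‖parabolaExt g z.2 z.1‖ ^ 2) ^ ρ)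
      ≤ ENNReal.ofReal (ρ * 16 * 8 ^ (ρ - 2) / (ρ - 2))
        * ∫⁻ h in Ioi 0, ENNReal.ofReal (n ^ (ρ - 2) * h ^ (ρ - 2 - 1)) * autocorr g h := by
  have hρ2 : 0 < ρ - 2 := by linarith
  refine (lintegral_rpow_le_of_meas_lt_le (fun z ↦ by positivity)
    ((measurable_parabolaExt hg).norm.pow_const 2).aemeasurable
    (A := fun h ↦ autocorr g h * ENNReal.ofReal h⁻¹)
    ((measurable_autocorr hg).mul (by fun_prop)) (by norm_num) (c := 8 * n) (by positivity) hρ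
    fun t ht ↦ meas_lt_norm_parabolaExt_sq_le hg hgi hn hgn ht).trans_eq ?_
  rw [← lintegral_const_mul' _ _ ENNReal.ofReal_ne_top,
    ← lintegral_const_mul' _ _ ENNReal.ofReal_ne_top]
  refine setLIntegral_congr_fun measurableSet_Ioi fun h hh ↦ ?_
  have hh' : 0 < h := hh
  rw [mul_comm (autocorr g h), ← mul_assoc, ← mul_assoc, ← mul_assoc,
    ← ENNReal.ofReal_mul (by positivity), ← ENNReal.ofReal_mul (by positivity),
    ← ENNReal.ofReal_mul (by positivity), Real.mul_rpow (by norm_num) hn.le,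
    Real.rpow_sub_one hh'.ne']
  ring_nf

/-- The mass of the autocorrelation sits at differences `h ≳ n`, where `n = ‖g‖₂²`, which lets
the factor `n ^ (r / 2 - 2)` be traded for a power of `h`. -/
lemma exists_lintegral_enorm_parabolaExt_rpow_le {r : ℝ} (hr : 5 ≤ r) : ∃ C : ℝ≥0∞, C ≠ ⊤ ∧
    ∀ g : ℝ → ℂ, Measurable g → Integrable g → (∀ ξ, ‖g ξ‖ₑ ≤ 1) →
      ∫⁻ t, ∫⁻ x, ‖parabolaExt g x t‖ₑ ^ r
        ≤ C * ∫⁻ h in Ioi 0, ENNReal.ofReal (h ^ (r - 5)) * autocorr g h := by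
  set ρ := r / 2 with hρ
  refine ⟨ENNReal.ofReal (ρ * 16 * 8 ^ (ρ - 2) / (ρ - 2))
    * (ENNReal.ofReal (ρ - 2)⁻¹ * ENNReal.ofReal (4 ^ (2 * (ρ - 2)))
      + ENNReal.ofReal (4 ^ (ρ - 2))), by finiteness, fun g hg hgi hg1 ↦ ?_⟩
  by_cases hzero : ∫⁻ ξ, ‖g ξ‖ₑ ^ 2 = 0
  · rw [lintegral_eq_zero_iff (hg.enorm.pow_const 2)] at hzero
    have hg0 : g =ᵐ[volume] 0 := hzero.mono fun ξ hξ ↦ by simpa using hξ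
    simp [parabolaExt_eq_zero hg0, ENNReal.zero_rpow_of_pos (by linarith : 0 < r)]
  have hfin : ∫⁻ ξ, ‖g ξ‖ₑ ^ 2 ≠ ⊤ := ne_top_of_le_ne_top hgi.2.ne <| lintegral_mono fun ξ ↦ by
    rw [sq]
    exact mul_le_of_le_one_right' (hg1 ξ)
  have hn := ENNReal.toReal_pos hzero hfin
  have hgn := (ENNReal.ofReal_toReal hfin).symm
  set n := (∫⁻ ξ, ‖g ξ‖ₑ ^ 2).toReal
  calc ∫⁻ t, ∫⁻ x, ‖parabolaExt g x t‖ₑ ^ r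
      = ∫⁻ z : ℝ × ℝ, ENNReal.ofReal ((‖parabolaExt g z.2 z.1‖ ^ 2) ^ ρ) := by
        rw [Measure.volume_eq_prod, lintegral_prod _ (Measurable.aemeasurable <|
          (((measurable_parabolaExt hg).norm.pow_const 2).pow_const ρ).ennreal_ofReal)]
        congr! 4 with - x
        rw [← Real.rpow_natCast_mul (norm_nonneg _), ← ofReal_norm,
          ENNReal.ofReal_rpow_of_nonneg (norm_nonneg _) (by linarith), hρ]
        push_cast
        rw [mul_div_cancel₀ r two_ne_zero]
    _ ≤ _ := lintegral_norm_parabolaExt_sq_rpow_le (by linarith) hg hgi hn hgn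
    _ ≤ _ := by
        have hmass := lintegral_mul_rpow_le (s := ρ - 2) (by linarith) hn (measurable_autocorr hg)
          (fun h ↦ hgn ▸ autocorr_le hg1 h) (hgn ▸ (two_mul_lintegral_autocorr hg).ge)
        rw [show 2 * (ρ - 2) - 1 = r - 5 by rw [hρ]; ring] at hmass
        exact (mul_le_mul_right hmass _).trans_eq (mul_assoc _ _ _).symm

end ParabolaEstimate

section Transversal

lemma lintegral_comp_mul_left (P : ℝ → ℝ≥0∞) {c : ℝ} (hc : c ≠ 0) :
    ∫⁻ x, P (c * x) = ENNReal.ofReal |c⁻¹| * ∫⁻ x, P x := by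
  have hmap : ∫⁻ x, P (c * x) = ∫⁻ y, P y ∂Measure.map (c * ·) volume :=
    ((Homeomorph.mulLeft₀ c hc).measurableEmbedding.lintegral_map P).symm
  rw [hmap, Real.map_volume_mul_left hc, lintegral_smul_measure, smul_eq_mul]

lemma lintegral_mul_comp_lines {P R : ℝ → ℝ≥0∞} (hP : Measurable P) (hR : Measurable R) {a b : ℝ}
    (hab : a ≠ b) : ∫⁻ w : ℝ × ℝ, P (w.2 + w.1 * a) * R (w.2 + w.1 * b)
      = ENNReal.ofReal |a - b|⁻¹ * ((∫⁻ t, P t) * ∫⁻ t, R t) := by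
  have hshift (u : ℝ) : ∫⁻ y, P (y + u * a) * R (y + u * b) = ∫⁻ y, P (y + (a - b) * u) * R y := by
    rw [← lintegral_add_right_eq_self (fun y ↦ P (y + (a - b) * u) * R y) (u * b)]
    congr with y
    ring_nf
  have hscale (y : ℝ) : ∫⁻ u, P (y + (a - b) * u) * R y
      = ENNReal.ofReal |a - b|⁻¹ * (∫⁻ t, P t) * R y := by
    rw [lintegral_mul_const _ (by fun_prop),
      lintegral_comp_mul_left (fun t ↦ P (y + t)) (sub_ne_zero.2 hab),
      lintegral_add_left_eq_self, abs_inv]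
  rw [Measure.volume_eq_prod, lintegral_prod _ (Measurable.aemeasurable (by fun_prop))]
  simp_rw [hshift]
  rw [lintegral_lintegral_swap (Measurable.aemeasurable (by fun_prop))]
  simp_rw [hscale]
  rw [lintegral_const_mul _ hR, mul_assoc]

end Transversal

section PlaneEstimate

/-- The extension operator of `{(ξ, η, ξ², ξη)}` at the point `(x, y, t, u)`, for functions on
`ℝ × ℝ`. -/
noncomputable def planeExt (f : ℝ × ℝ → ℂ) (x y t u : ℝ) : ℂ :=
  ∫ z : ℝ × ℝ, (𝐞 (x * z.1 + y * z.2 + t * z.1 ^ 2 + u * (z.1 * z.2)) : ℂ) * f z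

/-- The partial Fourier transform `∫ 𝐞(t η) f(ξ, η) dη` in the second variable. -/
noncomputable def sliceFourier (f : ℝ × ℝ → ℂ) (ξ t : ℝ) : ℂ := ∫ η, (𝐞 (t * η) : ℂ) * f (ξ, η)

/-- For frozen `y` and `u`, `planeExt f` is the parabola extension of this function of `ξ`. -/
noncomputable def lineFourier (f : ℝ × ℝ → ℂ) (y u ξ : ℝ) : ℂ := sliceFourier f ξ (y + u * ξ)

lemma integrable_of_support_subset_Icc {α : Type*} [Preorder α] [TopologicalSpace α]
    [CompactIccSpace α] [MeasurableSpace α] {μ : Measure α} [IsFiniteMeasureOnCompacts μ]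
    {f : α → ℂ} {a b : α} (hf : AEStronglyMeasurable f μ) {C : ℝ≥0∞} (hC : C ≠ ⊤)
    (hfC : ∀ x, ‖f x‖ₑ ≤ C) (hsupp : Function.support f ⊆ Icc a b) : Integrable f μ := by
  refine (integrableOn_iff_integrable_of_support_subset hsupp).1 <|
    Measure.integrableOn_of_bounded (M := C.toReal) isCompact_Icc.measure_ne_top hf
      (.of_forall fun x ↦ ?_)
  rw [← toReal_enorm]
  exact ENNReal.toReal_mono hC (hfC x)

variable {f : ℝ × ℝ → ℂ}

lemma measurable_sliceFourier (hf : Measurable f) :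
    Measurable fun w : ℝ × ℝ ↦ sliceFourier f w.1 w.2 :=
  StronglyMeasurable.measurable <| StronglyMeasurable.integral_prod_right'
    (f := fun q : (ℝ × ℝ) × ℝ ↦ (𝐞 (q.1.2 * q.2) : ℂ) * f (q.1.1, q.2))
    (Measurable.stronglyMeasurable (by fun_prop))

lemma enorm_sliceFourier_le (f : ℝ × ℝ → ℂ) (ξ t : ℝ) :
    ‖sliceFourier f ξ t‖ₑ ≤ ∫⁻ η, ‖f (ξ, η)‖ₑ :=
  (enorm_integral_le_lintegral_enorm _).trans_eq (by simp only [enorm_fourierChar_mul])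

lemma planeExt_eq_parabolaExt (hfi : Integrable f) (x y t u : ℝ) :
    planeExt f x y t u = parabolaExt (lineFourier f y u) x t := by
  have hint := integrable_fourierChar_mul
    (θ := fun z : ℝ × ℝ ↦ x * z.1 + y * z.2 + t * z.1 ^ 2 + u * (z.1 * z.2)) hfi (by fun_prop)
  rw [planeExt, Measure.volume_eq_prod, integral_prod _ hint, parabolaExt]
  congr with ξ
  rw [lineFourier, sliceFourier, ← integral_const_mul]
  congr with η
  rw [← mul_assoc (𝐞 _ : ℂ), ← coe_fourierChar_add]
  ring_nf

lemma measurable_midpointProd_lineFourier (hf : Measurable f) :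
    Measurable fun q : (ℝ × ℝ) × ℝ × ℝ ↦ midpointProd (lineFourier f q.1.2 q.1.1) q.2 := by
  have hslice := measurable_sliceFourier hf
  exact (hslice.comp (f := fun q : (ℝ × ℝ) × ℝ × ℝ ↦
      (q.2.1 + q.2.2 / 2, q.1.2 + q.1.1 * (q.2.1 + q.2.2 / 2))) (by fun_prop)).mul
    (hslice.comp (f := fun q : (ℝ × ℝ) × ℝ × ℝ ↦
      (q.2.1 - q.2.2 / 2, q.1.2 + q.1.1 * (q.2.1 - q.2.2 / 2))) (by fun_prop))

/-- The lines `y + u (m ± h / 2)` are transversal with Jacobian `h`. -/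
lemma lintegral_autocorr_lineFourier_le (hf : Measurable f)
    (hslice : ∀ ξ, Integrable fun η ↦ f (ξ, η)) {h : ℝ} (hh : 0 < h) :
    ∫⁻ w : ℝ × ℝ, autocorr (lineFourier f w.2 w.1) h ≤ ENNReal.ofReal h⁻¹
      * ∫⁻ m, (∫⁻ η, ‖f (m + h / 2, η)‖ₑ ^ 2) * ∫⁻ η, ‖f (m - h / 2, η)‖ₑ ^ 2 := by
  have hmeas (ξ : ℝ) : Measurable fun t ↦ ‖sliceFourier f ξ t‖ₑ ^ 2 :=
    ((measurable_sliceFourier hf).comp measurable_prodMk_left).enorm.pow_const 2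
  have hplancherel (ξ : ℝ) : ∫⁻ t, ‖sliceFourier f ξ t‖ₑ ^ 2 ≤ ∫⁻ η, ‖f (ξ, η)‖ₑ ^ 2 :=
    lintegral_enorm_sq_integral_fourierChar_le (hslice ξ)
  have hne (m : ℝ) : m + h / 2 ≠ m - h / 2 := by linarith
  have hdiff (m : ℝ) : |m + h / 2 - (m - h / 2)|⁻¹ = h⁻¹ := by
    rw [add_sub_sub_cancel, add_halves, abs_of_pos hh]
  unfold autocorr
  rw [lintegral_lintegral_swap (Measurable.aemeasurable <|
      ((measurable_midpointProd_lineFourier hf).comp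
        (f := fun q : (ℝ × ℝ) × ℝ ↦ (q.1, q.2, h)) (by fun_prop)).enorm.pow_const 2),
    ← lintegral_const_mul' _ _ ENNReal.ofReal_ne_top]
  refine lintegral_mono fun m ↦ ?_
  simp only [midpointProd, lineFourier, enorm_mul, mul_pow]
  rw [lintegral_mul_comp_lines (hmeas _) (hmeas _) (hne m), hdiff]
  exact mul_le_mul_right (mul_le_mul' (hplancherel _) (hplancherel _)) _

lemma eq_zero_of_fst_notMem_Icc (hsupp : Function.support f ⊆ Icc 0 1) {ξ : ℝ}
    (hξ : ξ ∉ Icc (0 : ℝ) 1) (η : ℝ) : f (ξ, η) = 0 :=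
  Function.support_subset_iff'.1 hsupp _ fun h ↦ hξ ⟨h.1.1, h.2.1⟩

lemma lintegral_slice_mul_le (hf : Measurable f) (hf1 : ∀ z, ‖f z‖ₑ ≤ 1)
    (hsupp : Function.support f ⊆ Icc 0 1) (h : ℝ) :
    ∫⁻ m, (∫⁻ η, ‖f (m + h / 2, η)‖ₑ ^ 2) * ∫⁻ η, ‖f (m - h / 2, η)‖ₑ ^ 2
      ≤ (Iic 1).indicator 1 h * ∫⁻ z, ‖f z‖ₑ ^ 2 := by
  by_cases hh : h ∈ Iic 1
  · have hslice (ξ : ℝ) : ∫⁻ η, ‖f (ξ, η)‖ₑ ^ 2 ≤ 1 := by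
      refine (lintegral_le_meas (s := Icc 0 1) (fun η ↦ pow_le_one' (hf1 _) 2) fun η hη ↦ ?_).trans
        (by simp)
      rw [Function.support_subset_iff'.1 hsupp _ fun h ↦ hη ⟨h.1.2, h.2.2⟩]
      simp
    rw [indicator_of_mem hh, Pi.one_apply, one_mul, Measure.volume_eq_prod,
      lintegral_prod _ (hf.enorm.pow_const 2).aemeasurable,
      ← lintegral_add_right_eq_self (fun ξ ↦ ∫⁻ η, ‖f (ξ, η)‖ₑ ^ 2) (h / 2)]
    exact lintegral_mono fun m ↦ mul_le_of_le_one_right' (hslice _)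
  · rw [indicator_of_notMem hh, zero_mul, nonpos_iff_eq_zero, lintegral_eq_zero_of_ae_eq_zero]
    refine .of_forall fun m ↦ ?_
    by_cases hm : m + h / 2 ∈ Icc (0 : ℝ) 1
    · have hm' : m - h / 2 ∉ Icc (0 : ℝ) 1 := fun hm' ↦ by
        linarith [hm.2, hm'.1, not_le.1 (mem_Iic.not.1 hh)]
      simp [eq_zero_of_fst_notMem_Icc hsupp hm']
    · simp [eq_zero_of_fst_notMem_Icc hsupp hm]

lemma enorm_lineFourier_le_one (hf1 : ∀ z, ‖f z‖ₑ ≤ 1) (hsupp : Function.support f ⊆ Icc 0 1)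
    (y u ξ : ℝ) : ‖lineFourier f y u ξ‖ₑ ≤ 1 := by
  refine (enorm_sliceFourier_le f ξ _).trans <|
    (lintegral_le_meas (s := Icc 0 1) (fun η ↦ hf1 _) fun η hη ↦ ?_).trans (by simp)
  rw [Function.support_subset_iff'.1 hsupp _ fun h ↦ hη ⟨h.1.2, h.2.2⟩, enorm_zero]

lemma support_lineFourier_subset (hsupp : Function.support f ⊆ Icc 0 1) (y u : ℝ) :
    Function.support (lineFourier f y u) ⊆ Icc 0 1 :=
  Function.support_subset_iff'.2 fun ξ hξ ↦ by
    simp [lineFourier, sliceFourier, eq_zero_of_fst_notMem_Icc hsupp hξ]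

lemma measurable_lineFourier (hf : Measurable f) (y u : ℝ) : Measurable (lineFourier f y u) :=
  (measurable_sliceFourier hf).comp (f := fun ξ : ℝ ↦ (ξ, y + u * ξ)) (by fun_prop)

lemma rpow_mul_lintegral_autocorr_lineFourier_le (hf : Measurable f) (hf1 : ∀ z, ‖f z‖ₑ ≤ 1)
    (hsupp : Function.support f ⊆ Icc 0 1) {h : ℝ} (hh : 0 < h) (s : ℝ) :
    ENNReal.ofReal (h ^ s) * ∫⁻ w : ℝ × ℝ, autocorr (lineFourier f w.2 w.1) h
      ≤ (Iic 1).indicator (fun h ↦ ENNReal.ofReal (h ^ (s - 1))) h * ∫⁻ z, ‖f z‖ₑ ^ 2 := by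
  have hslice (ξ : ℝ) : Integrable fun η ↦ f (ξ, η) :=
    integrable_of_support_subset_Icc (hf.comp measurable_prodMk_left).aestronglyMeasurable
      ENNReal.one_ne_top (fun η ↦ hf1 _) (Function.support_subset_iff'.2 fun η hη ↦
        Function.support_subset_iff'.1 hsupp _ fun h ↦ hη ⟨h.1.2, h.2.2⟩)
  calc ENNReal.ofReal (h ^ s) * ∫⁻ w : ℝ × ℝ, autocorr (lineFourier f w.2 w.1) h
      ≤ ENNReal.ofReal (h ^ s)
          * (ENNReal.ofReal h⁻¹ * ((Iic 1).indicator 1 h * ∫⁻ z, ‖f z‖ₑ ^ 2)) :=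
        mul_le_mul_right ((lintegral_autocorr_lineFourier_le hf hslice hh).trans
          (mul_le_mul_right (lintegral_slice_mul_le hf hf1 hsupp h) _)) _
    _ = (Iic 1).indicator (fun h ↦ ENNReal.ofReal (h ^ (s - 1))) h * ∫⁻ z, ‖f z‖ₑ ^ 2 := by
        rw [← mul_assoc, ← mul_assoc, ← ENNReal.ofReal_mul (by positivity),
          ← div_eq_mul_inv, ← Real.rpow_sub_one hh.ne']
        by_cases h1 : h ≤ 1 <;> simp [h1]

lemma lintegral_rpow_mul_autocorr_lineFourier_le {s : ℝ} (hs : 0 < s) (hf : Measurable f)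
    (hf1 : ∀ z, ‖f z‖ₑ ≤ 1) (hsupp : Function.support f ⊆ Icc 0 1) :
    ∫⁻ w : ℝ × ℝ, ∫⁻ h in Ioi 0, ENNReal.ofReal (h ^ s) * autocorr (lineFourier f w.2 w.1) h
      ≤ ENNReal.ofReal s⁻¹ * ∫⁻ z, ‖f z‖ₑ ^ 2 := by
  have hmeas : Measurable fun q : (ℝ × ℝ) × ℝ ↦ autocorr (lineFourier f q.1.2 q.1.1) q.2 :=
    Measurable.lintegral_prod_right' (f := fun q : ((ℝ × ℝ) × ℝ) × ℝ ↦
        ‖midpointProd (lineFourier f q.1.1.2 q.1.1.1) (q.2, q.1.2)‖ₑ ^ 2) <|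
      ((measurable_midpointProd_lineFourier hf).comp
        (f := fun q : ((ℝ × ℝ) × ℝ) × ℝ ↦ (q.1.1, q.2, q.1.2)) (by fun_prop)).enorm.pow_const 2
  rw [lintegral_lintegral_swap (Measurable.aemeasurable (by fun_prop))]
  calc ∫⁻ h in Ioi 0, ∫⁻ w : ℝ × ℝ, ENNReal.ofReal (h ^ s) * autocorr (lineFourier f w.2 w.1) h
      ≤ ∫⁻ h in Ioi 0,
          (Iic 1).indicator (fun h ↦ ENNReal.ofReal (h ^ (s - 1))) h * ∫⁻ z, ‖f z‖ₑ ^ 2 := by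
        simp_rw [lintegral_const_mul' _ _ ENNReal.ofReal_ne_top]
        exact setLIntegral_mono' measurableSet_Ioi fun h hh ↦
          rpow_mul_lintegral_autocorr_lineFourier_le hf hf1 hsupp hh s
    _ = ENNReal.ofReal s⁻¹ * ∫⁻ z, ‖f z‖ₑ ^ 2 := by
        rw [lintegral_mul_const _ (by fun_prop (disch := exact measurableSet_Iic)),
          setLIntegral_indicator measurableSet_Iic, Iic_inter_Ioi,
          ← setLIntegral_congr Ioo_ae_eq_Ioc, lintegral_Ioo_rpow (by linarith) zero_le_one,
          Real.one_rpow, one_div, sub_add_cancel]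

lemma exists_lintegral_enorm_planeExt_rpow_le {r : ℝ} (hr : 5 < r) : ∃ C : ℝ≥0∞, C ≠ ⊤ ∧
    ∀ f : ℝ × ℝ → ℂ, Measurable f → (∀ z, ‖f z‖ₑ ≤ 1) → Function.support f ⊆ Icc 0 1 →
      ∫⁻ w : ℝ × ℝ, ∫⁻ t, ∫⁻ x, ‖planeExt f x w.2 t w.1‖ₑ ^ r ≤ C * ∫⁻ z, ‖f z‖ₑ ^ 2 := by
  obtain ⟨C, hC, hparabola⟩ := exists_lintegral_enorm_parabolaExt_rpow_le hr.le
  refine ⟨C * ENNReal.ofReal (r - 5)⁻¹, by finiteness, fun f hf hf1 hsupp ↦ ?_⟩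
  have hfi : Integrable f :=
    integrable_of_support_subset_Icc hf.aestronglyMeasurable ENNReal.one_ne_top hf1 hsupp
  have hline (y u : ℝ) : Integrable (lineFourier f y u) :=
    integrable_of_support_subset_Icc (measurable_lineFourier hf y u).aestronglyMeasurable
      ENNReal.one_ne_top (enorm_lineFourier_le_one hf1 hsupp y u)
      (support_lineFourier_subset hsupp y u)
  calc ∫⁻ w : ℝ × ℝ, ∫⁻ t, ∫⁻ x, ‖planeExt f x w.2 t w.1‖ₑ ^ r
      ≤ ∫⁻ w : ℝ × ℝ, C * ∫⁻ h in Ioi 0,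
          ENNReal.ofReal (h ^ (r - 5)) * autocorr (lineFourier f w.2 w.1) h := by
        simp_rw [planeExt_eq_parabolaExt hfi]
        exact lintegral_mono fun w ↦ hparabola _ (measurable_lineFourier hf _ _) (hline _ _)
          (enorm_lineFourier_le_one hf1 hsupp _ _)
    _ ≤ C * ENNReal.ofReal (r - 5)⁻¹ * ∫⁻ z, ‖f z‖ₑ ^ 2 := by
        rw [lintegral_const_mul' _ _ hC, mul_assoc]
        exact mul_le_mul_right
          (lintegral_rpow_mul_autocorr_lineFourier_le (sub_pos.2 hr) hf hf1 hsupp) C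

end PlaneEstimate

section ExtensionOperator

/-- Lebesgue measure on the unit cube `[0,1]^d`. -/
noncomputable abbrev unitCube (d : ℕ) : Measure (Fin d → ℝ) := volume.restrict (Icc 0 1)

instance isProbabilityMeasure_unitCube (d : ℕ) : IsProbabilityMeasure (unitCube d) :=
  ⟨by simp [unitCube, Real.volume_Icc_pi]⟩

variable {d n : ℕ} {Q : (Fin d → ℝ) → Fin n → ℝ} {f g : (Fin d → ℝ) → ℂ}

/-- The pairing `x · (ξ, Q ξ)`, whose character is the kernel of `extOp`. -/
def phase (Q : (Fin d → ℝ) → Fin n → ℝ) (x : Fin (d + n) → ℝ) (ξ : Fin d → ℝ) : ℝ :=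
  (∑ i, x (Fin.castAdd n i) * ξ i) + ∑ j, x (Fin.natAdd d j) * Q ξ j

lemma measurable_phase (hQ : Measurable Q) :
    Measurable fun z : (Fin (d + n) → ℝ) × (Fin d → ℝ) ↦ phase Q z.1 z.2 := by
  unfold phase
  fun_prop

lemma measurable_phase_right (hQ : Measurable Q) (x : Fin (d + n) → ℝ) :
    Measurable (phase Q x) :=
  (measurable_phase hQ).comp measurable_prodMk_left

lemma extOp_eq (Q : (Fin d → ℝ) → Fin n → ℝ) (f : (Fin d → ℝ) → ℂ) (x : Fin (d + n) → ℝ) :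
    extOp d n Q f x = ∫ ξ, (𝐞 (phase Q x ξ) : ℂ) * f ξ ∂unitCube d := by
  simp only [extOp, phase, Real.fourierChar_apply]
  congr! 4
  push_cast
  ring

lemma measurable_extOp (hQ : Measurable Q) (hf : Measurable f) : Measurable (extOp d n Q f) := by
  simp_rw [funext (extOp_eq Q f)]
  have hphase := measurable_phase hQ
  exact StronglyMeasurable.measurable <| StronglyMeasurable.integral_prod_right'
    (f := fun z : (Fin (d + n) → ℝ) × (Fin d → ℝ) ↦ (𝐞 (phase Q z.1 z.2) : ℂ) * f z.2)
    (Measurable.stronglyMeasurable (by fun_prop))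

lemma enorm_extOp_le (Q : (Fin d → ℝ) → Fin n → ℝ) (f : (Fin d → ℝ) → ℂ) (x : Fin (d + n) → ℝ) :
    ‖extOp d n Q f x‖ₑ ≤ ∫⁻ ξ, ‖f ξ‖ₑ ∂unitCube d := by
  rw [extOp_eq]
  exact (enorm_integral_le_lintegral_enorm _).trans_eq (by simp only [enorm_fourierChar_mul])

lemma eLpNorm_top_extOp_le (Q : (Fin d → ℝ) → Fin n → ℝ) (f : (Fin d → ℝ) → ℂ) :
    eLpNorm (extOp d n Q f) ⊤ volume ≤ eLpNorm f 1 (unitCube d) := by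
  rw [eLpNorm_exponent_top, eLpNorm_one_eq_lintegral_enorm]
  exact eLpNormEssSup_le_of_ae_enorm_bound (.of_forall (enorm_extOp_le Q f))

lemma integrable_extOp_integrand (hQ : Measurable Q) (hf : Integrable f (unitCube d))
    (x : Fin (d + n) → ℝ) : Integrable (fun ξ ↦ (𝐞 (phase Q x ξ) : ℂ) * f ξ) (unitCube d) :=
  integrable_fourierChar_mul hf (measurable_phase_right hQ x)

lemma extOp_add (hQ : Measurable Q) (hf : Integrable f (unitCube d))
    (hg : Integrable g (unitCube d)) : extOp d n Q (f + g) = extOp d n Q f + extOp d n Q g := by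
  ext x
  simp only [extOp_eq, Pi.add_apply, mul_add (_ : ℂ)]
  exact integral_add (integrable_extOp_integrand hQ hf x) (integrable_extOp_integrand hQ hg x)

lemma extOp_smul (Q : (Fin d → ℝ) → Fin n → ℝ) (c : ℂ) (f : (Fin d → ℝ) → ℂ) :
    extOp d n Q (c • f) = c • extOp d n Q f := by
  ext x
  simp only [extOp_eq, Pi.smul_apply, smul_eq_mul, mul_left_comm _ c, integral_const_mul]

lemma extOp_congr_ae (hfg : f =ᵐ[unitCube d] g) : extOp d n Q f = extOp d n Q g := by
  ext x
  rw [extOp_eq, extOp_eq]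
  exact integral_congr_ae (hfg.mono fun ξ hξ ↦ congrArg _ hξ)

lemma tendsto_extOp (hQ : Measurable Q) {F : ℕ → (Fin d → ℝ) → ℂ}
    (hF : ∀ k, Measurable (F k)) (hf : Integrable f (unitCube d)) (hle : ∀ k ξ, ‖F k ξ‖ ≤ ‖f ξ‖)
    (hlim : ∀ ξ, Tendsto (F · ξ) atTop (𝓝 (f ξ))) (x : Fin (d + n) → ℝ) :
    Tendsto (fun k ↦ extOp d n Q (F k) x) atTop (𝓝 (extOp d n Q f x)) := by
  simp only [extOp_eq]
  have hphase := measurable_phase_right hQ x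
  refine tendsto_integral_of_dominated_convergence (fun ξ ↦ ‖f ξ‖)
    (fun k ↦ Measurable.aestronglyMeasurable (by fun_prop)) hf.norm
    (fun k ↦ .of_forall fun ξ ↦ ?_) (.of_forall fun ξ ↦ (hlim ξ).const_mul _)
  rw [norm_mul, Circle.norm_coe, one_mul]
  exact hle k ξ

end ExtensionOperator

section Truncation

variable {α : Type*}

/-- The truncation of `f` at height `2 ^ k`. -/
noncomputable def dyadicTrunc (f : α → ℂ) (k : ℕ) : α → ℂ := {a | ‖f a‖ ≤ 2 ^ k}.indicator f

/-- The part of `f` of size between `2 ^ k` and `2 ^ (k + 1)`. -/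
noncomputable def dyadicPiece (f : α → ℂ) (k : ℕ) : α → ℂ :=
  {a | 2 ^ k < ‖f a‖ ∧ ‖f a‖ ≤ 2 ^ (k + 1)}.indicator f

lemma dyadicTrunc_add_dyadicPiece (f : α → ℂ) (k : ℕ) :
    dyadicTrunc f k + dyadicPiece f k = dyadicTrunc f (k + 1) := by
  have hmono : (2 : ℝ) ^ k ≤ 2 ^ (k + 1) := pow_le_pow_right₀ one_le_two k.le_succ
  ext a
  rcases le_or_gt ‖f a‖ (2 ^ k) with hk | hk
  · simp [dyadicTrunc, dyadicPiece, hk, hk.trans hmono, hk.not_gt]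
  · simp [dyadicTrunc, dyadicPiece, indicator, hk, hk.not_ge]

lemma norm_dyadicTrunc_le (f : α → ℂ) (k : ℕ) (a : α) : ‖dyadicTrunc f k a‖ ≤ ‖f a‖ :=
  norm_indicator_le_norm_self f a

lemma norm_dyadicTrunc_le_two_pow (f : α → ℂ) (k : ℕ) (a : α) : ‖dyadicTrunc f k a‖ ≤ 2 ^ k := by
  by_cases ha : ‖f a‖ ≤ 2 ^ k <;> simp [dyadicTrunc, ha]

lemma norm_dyadicPiece_le (f : α → ℂ) (k : ℕ) (a : α) : ‖dyadicPiece f k a‖ ≤ 2 ^ (k + 1) := by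
  by_cases ha : 2 ^ k < ‖f a‖ ∧ ‖f a‖ ≤ 2 ^ (k + 1)
  · simp [dyadicPiece, ha]
  · simp [dyadicPiece, ha]

lemma tendsto_dyadicTrunc (f : α → ℂ) (a : α) :
    Tendsto (dyadicTrunc f · a) atTop (𝓝 (f a)) := by
  refine tendsto_const_nhds.congr' ?_
  filter_upwards [(tendsto_pow_atTop_atTop_of_one_lt one_lt_two).eventually_ge_atTop ‖f a‖]
    with k hk
  rw [dyadicTrunc, indicator_of_mem (s := {a | ‖f a‖ ≤ 2 ^ k}) hk]

variable [MeasurableSpace α] {f : α → ℂ}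

lemma measurable_dyadicTrunc (hf : Measurable f) (k : ℕ) : Measurable (dyadicTrunc f k) :=
  hf.indicator (measurableSet_le hf.norm measurable_const)

lemma measurable_dyadicPiece (hf : Measurable f) (k : ℕ) : Measurable (dyadicPiece f k) :=
  hf.indicator ((measurableSet_lt measurable_const hf.norm).inter
    (measurableSet_le hf.norm measurable_const))

lemma measure_support_dyadicPiece_le {μ : Measure α} {p : ℝ≥0∞} (hp0 : p ≠ 0) (hp : p ≠ ⊤)
    (hf : AEStronglyMeasurable f μ) (hf1 : eLpNorm f p μ ≤ 1) (k : ℕ) :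
    μ (Function.support (dyadicPiece f k)) ≤ ((2 : ℝ≥0∞) ^ k)⁻¹ ^ p.toReal := by
  have hsub : Function.support (dyadicPiece f k) ⊆ {a | (2 : ℝ≥0∞) ^ k ≤ ‖f a‖ₑ} := by
    intro a ha
    have hk : (2 : ℝ) ^ k < ‖f a‖ := (support_indicator_subset ha).1
    rw [mem_ofPred_eq, ← ofReal_norm]
    simpa [ENNReal.ofReal_pow] using ENNReal.ofReal_le_ofReal hk.le
  calc μ (Function.support (dyadicPiece f k))
      ≤ μ {a | (2 : ℝ≥0∞) ^ k ≤ ‖f a‖ₑ} := measure_mono hsub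
    _ ≤ ((2 : ℝ≥0∞) ^ k)⁻¹ ^ p.toReal * eLpNorm f p μ ^ p.toReal :=
        meas_ge_le_mul_pow_eLpNorm_enorm μ hp0 hp hf (by simp) (by simp)
    _ ≤ ((2 : ℝ≥0∞) ^ k)⁻¹ ^ p.toReal :=
        mul_le_of_le_one_right' (ENNReal.rpow_le_one hf1 ENNReal.toReal_nonneg)

end Truncation

section Interpolation

variable {d n : ℕ} {Q : (Fin d → ℝ) → Fin n → ℝ} {f : (Fin d → ℝ) → ℂ} {A : ℝ≥0∞} {r : ℝ}
  {p q : ℝ≥0∞}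

/-- The restricted strong type `(r, r)` estimate for `extOp`, in the form
`‖E f‖_r ^ r ≤ A |supp f|` for functions bounded by `1`. -/
def IsRestrictedType (Q : (Fin d → ℝ) → Fin n → ℝ) (r : ℝ) (A : ℝ≥0∞) : Prop :=
  ∀ f : (Fin d → ℝ) → ℂ, Measurable f → (∀ ξ, ‖f ξ‖ₑ ≤ 1) →
    ∫⁻ x, ‖extOp d n Q f x‖ₑ ^ r ≤ A * unitCube d (Function.support f)

lemma IsRestrictedType.lintegral_enorm_extOp_rpow_le (hA : IsRestrictedType Q r A) (hr : 0 ≤ r)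
    (hf : Measurable f) (hf1 : ∀ ξ, ‖f ξ‖ₑ ≤ 1) {s : ℝ} (hrs : r ≤ s) :
    ∫⁻ x, ‖extOp d n Q f x‖ₑ ^ s ≤ A * unitCube d (Function.support f) ^ (s - r + 1) := by
  set a := unitCube d (Function.support f)
  have hsup (x) : ‖extOp d n Q f x‖ₑ ≤ a :=
    (enorm_extOp_le Q f x).trans (lintegral_le_meas hf1 fun ξ hξ ↦ by
      rw [Function.notMem_support.1 hξ, enorm_zero])
  have ha : a ^ (s - r) ≠ ⊤ := ENNReal.rpow_ne_top_of_nonneg (by linarith) (measure_ne_top _ _)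
  calc ∫⁻ x, ‖extOp d n Q f x‖ₑ ^ s
      ≤ ∫⁻ x, a ^ (s - r) * ‖extOp d n Q f x‖ₑ ^ r := lintegral_mono fun x ↦ by
        calc ‖extOp d n Q f x‖ₑ ^ s
            = ‖extOp d n Q f x‖ₑ ^ (s - r) * ‖extOp d n Q f x‖ₑ ^ r := by
              rw [← ENNReal.rpow_add_of_nonneg _ _ (by linarith) hr, sub_add_cancel]
          _ ≤ a ^ (s - r) * ‖extOp d n Q f x‖ₑ ^ r :=
              mul_le_mul_left (ENNReal.rpow_le_rpow (hsup x) (by linarith)) _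
    _ = a ^ (s - r) * ∫⁻ x, ‖extOp d n Q f x‖ₑ ^ r := lintegral_const_mul' _ _ ha
    _ ≤ a ^ (s - r) * (A * a) := mul_le_mul_right (hA f hf hf1) _
    _ = A * a ^ (s - r + 1) := by
        rw [ENNReal.rpow_add_of_nonneg _ _ (by linarith) zero_le_one, ENNReal.rpow_one]
        ring

lemma IsRestrictedType.eLpNorm_extOp_le (hA : IsRestrictedType Q r A) (hr : 1 ≤ r)
    (hq : q ≠ ⊤) (hrq : r ≤ q.toReal) (hf : Measurable f) {M : ℝ} (hM : 0 < M)
    (hfM : ∀ ξ, ‖f ξ‖ ≤ M) : eLpNorm (extOp d n Q f) q volume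
      ≤ ENNReal.ofReal M * (A ^ q.toReal⁻¹
        * unitCube d (Function.support f) ^ ((q.toReal - r + 1) / q.toReal)) := by
  have hq0 : 0 < q.toReal := by linarith
  have hMC : (M : ℂ) ≠ 0 := Complex.ofReal_ne_zero.2 hM.ne'
  have hnorm : ‖(M : ℂ)‖ₑ = ENNReal.ofReal M := by
    rw [← ofReal_norm, Complex.norm_of_nonneg hM.le]
  set g := (M : ℂ)⁻¹ • f
  have hg1 (ξ) : ‖g ξ‖ₑ ≤ 1 := by
    rw [← ofReal_norm, ENNReal.ofReal_le_one]
    change ‖(M : ℂ)⁻¹ • f ξ‖ ≤ 1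
    rw [norm_smul, norm_inv, Complex.norm_of_nonneg hM.le]
    exact (inv_mul_le_one₀ hM).2 (hfM ξ)
  have hsupp : Function.support g = Function.support f :=
    Function.support_const_smul_of_ne_zero _ _ (inv_ne_zero hMC)
  have hfg : f = (M : ℂ) • g := (smul_inv_smul₀ hMC f).symm
  rw [← hsupp, hfg, extOp_smul, eLpNorm_const_smul, hnorm,
    eLpNorm_eq_lintegral_rpow_enorm_toReal (ENNReal.toReal_pos_iff.1 hq0).1.ne' hq]
  refine mul_le_mul_right ?_ _
  calc (∫⁻ x, ‖extOp d n Q g x‖ₑ ^ q.toReal) ^ (1 / q.toReal)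
      ≤ (A * unitCube d (Function.support g) ^ (q.toReal - r + 1)) ^ (1 / q.toReal) :=
        ENNReal.rpow_le_rpow (hA.lintegral_enorm_extOp_rpow_le (by linarith)
          (hf.const_smul _) hg1 hrq) (by positivity)
    _ = _ := by
        rw [ENNReal.mul_rpow_of_nonneg _ _ (by positivity), ← ENNReal.rpow_mul, mul_one_div,
          one_div]

lemma IsRestrictedType.eLpNorm_extOp_dyadicPiece_le (hA : IsRestrictedType Q r A) (hr : 1 ≤ r)
    (hp0 : p ≠ 0) (hp : p ≠ ⊤) (hq : q ≠ ⊤) (hrq : r ≤ q.toReal) (hf : Measurable f)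
    (hf1 : eLpNorm f p (unitCube d) ≤ 1) (k : ℕ) :
    eLpNorm (extOp d n Q (dyadicPiece f k)) q volume ≤ 2 * A ^ q.toReal⁻¹
      * ((2 : ℝ≥0∞) ^ (1 - p.toReal * ((q.toReal - r + 1) / q.toReal))) ^ k := by
  set θ := (q.toReal - r + 1) / q.toReal
  have hθ : 0 ≤ θ := div_nonneg (by linarith) (by linarith)
  have hpow : ENNReal.ofReal (2 ^ (k + 1)) = 2 * (2 : ℝ≥0∞) ^ (k : ℝ) := by
    rw [ENNReal.ofReal_pow zero_le_two, ENNReal.ofReal_ofNat, pow_succ', ENNReal.rpow_natCast]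
  calc eLpNorm (extOp d n Q (dyadicPiece f k)) q volume
      ≤ ENNReal.ofReal (2 ^ (k + 1)) * (A ^ q.toReal⁻¹
          * unitCube d (Function.support (dyadicPiece f k)) ^ θ) :=
        hA.eLpNorm_extOp_le hr hq hrq (measurable_dyadicPiece hf k) (by positivity)
          (norm_dyadicPiece_le f k)
    _ ≤ ENNReal.ofReal (2 ^ (k + 1)) * (A ^ q.toReal⁻¹ * (((2 : ℝ≥0∞) ^ k)⁻¹ ^ p.toReal) ^ θ) := by
        gcongr
        exact measure_support_dyadicPiece_le hp0 hp hf.aestronglyMeasurable hf1 k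
    _ = 2 * A ^ q.toReal⁻¹ * ((2 : ℝ≥0∞) ^ (k : ℝ) * 2 ^ (-(k : ℝ) * (p.toReal * θ))) := by
        rw [hpow, ← ENNReal.rpow_natCast 2 k, ← ENNReal.rpow_neg, ← ENNReal.rpow_mul,
          ← ENNReal.rpow_mul]
        ring
    _ = 2 * A ^ q.toReal⁻¹ * ((2 : ℝ≥0∞) ^ (1 - p.toReal * θ)) ^ k := by
        rw [← ENNReal.rpow_add _ _ two_ne_zero ENNReal.ofNat_ne_top, ← ENNReal.rpow_natCast,
          ← ENNReal.rpow_mul]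
        ring_nf

lemma IsRestrictedType.eLpNorm_extOp_dyadicTrunc_le (hA : IsRestrictedType Q r A)
    (hQ : Measurable Q) (hr : 1 ≤ r) (hp1 : 1 ≤ p) (hp : p ≠ ⊤) (hq : q ≠ ⊤)
    (hrq : r ≤ q.toReal) (hf : Measurable f) (hf1 : eLpNorm f p (unitCube d) ≤ 1) (K : ℕ) :
    eLpNorm (extOp d n Q (dyadicTrunc f K)) q volume
      ≤ A ^ q.toReal⁻¹ + 2 * A ^ q.toReal⁻¹ * ∑ k ∈ Finset.range K,
        ((2 : ℝ≥0∞) ^ (1 - p.toReal * ((q.toReal - r + 1) / q.toReal))) ^ k := by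
  induction K with
  | zero =>
    refine (hA.eLpNorm_extOp_le hr hq hrq (measurable_dyadicTrunc hf 0) one_pos
      (fun ξ ↦ by simpa using norm_dyadicTrunc_le_two_pow f 0 ξ)).trans ?_
    rw [ENNReal.ofReal_one, one_mul, Finset.sum_range_zero, mul_zero, add_zero]
    exact mul_le_of_le_one_right' <| ENNReal.rpow_le_one prob_le_one <|
      div_nonneg (by linarith) (by linarith)
  | succ K ih =>
    have hfint : Integrable f (unitCube d) :=
      MemLp.integrable hp1 ⟨hf.aestronglyMeasurable, hf1.trans_lt ENNReal.one_lt_top⟩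
    have htrunc := measurable_dyadicTrunc hf K
    have hpiece := measurable_dyadicPiece hf K
    have hq1 : 1 ≤ q := by
      rw [← ENNReal.ofReal_toReal hq, ENNReal.one_le_ofReal]
      exact hr.trans hrq
    rw [← dyadicTrunc_add_dyadicPiece, extOp_add hQ
      (hfint.mono htrunc.aestronglyMeasurable (.of_forall (norm_dyadicTrunc_le f K)))
      (hfint.mono hpiece.aestronglyMeasurable (.of_forall (norm_indicator_le_norm_self f))),
      Finset.sum_range_succ, mul_add, ← add_assoc]
    exact (eLpNorm_add_le (measurable_extOp hQ htrunc).aestronglyMeasurable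
      (measurable_extOp hQ hpiece).aestronglyMeasurable hq1).trans <| add_le_add ih <|
      hA.eLpNorm_extOp_dyadicPiece_le hr (one_pos.trans_le hp1).ne' hp hq hrq hf hf1 K

lemma IsRestrictedType.exists_eLpNorm_extOp_le_of_eLpNorm_le_one (hA : IsRestrictedType Q r A)
    (hAtop : A ≠ ⊤) (hQ : Measurable Q) (hr : 1 ≤ r) (hp1 : 1 ≤ p) (hp : p ≠ ⊤) (hq : q ≠ ⊤)
    (hrq : r ≤ q.toReal) (hpq : 1 < p.toReal * ((q.toReal - r + 1) / q.toReal)) :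
    ∃ C : ℝ≥0∞, C ≠ ⊤ ∧ ∀ f : (Fin d → ℝ) → ℂ, Measurable f → eLpNorm f p (unitCube d) ≤ 1 →
      eLpNorm (extOp d n Q f) q volume ≤ C := by
  set ρ : ℝ≥0∞ := 2 ^ (1 - p.toReal * ((q.toReal - r + 1) / q.toReal))
  have hρ : ρ < 1 := ENNReal.rpow_lt_one_of_one_lt_of_neg ENNReal.one_lt_two (by linarith)
  have hB : A ^ q.toReal⁻¹ ≠ ⊤ := ENNReal.rpow_ne_top_of_nonneg (by positivity) hAtop
  have hgeom : (1 - ρ)⁻¹ ≠ ⊤ := ENNReal.inv_ne_top.2 (tsub_pos_of_lt hρ).ne'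
  refine ⟨A ^ q.toReal⁻¹ + 2 * A ^ q.toReal⁻¹ * (1 - ρ)⁻¹, by finiteness, fun f hf hf1 ↦ ?_⟩
  have hfint : Integrable f (unitCube d) :=
    MemLp.integrable hp1 ⟨hf.aestronglyMeasurable, hf1.trans_lt ENNReal.one_lt_top⟩
  refine (Lp.eLpNorm_lim_le_liminf_eLpNorm
    (fun K ↦ (measurable_extOp hQ (measurable_dyadicTrunc hf K)).aestronglyMeasurable) _
    (.of_forall (tendsto_extOp hQ (measurable_dyadicTrunc hf) hfint (norm_dyadicTrunc_le f)
      (tendsto_dyadicTrunc f)))).trans ?_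
  refine liminf_le_of_frequently_le' (.of_forall fun K ↦ ?_)
  refine (hA.eLpNorm_extOp_dyadicTrunc_le hQ hr hp1 hp hq hrq hf hf1 K).trans ?_
  rw [← ENNReal.tsum_geometric]
  gcongr
  exact ENNReal.sum_le_tsum _

lemma eLpNorm_extOp_le_mul_of_forall_eLpNorm_le_one {C : ℝ≥0∞} (hp0 : p ≠ 0)
    (hC : ∀ f : (Fin d → ℝ) → ℂ, Measurable f → eLpNorm f p (unitCube d) ≤ 1 →
      eLpNorm (extOp d n Q f) q volume ≤ C) (hC0 : C ≠ 0) (hf : Measurable f) :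
    eLpNorm (extOp d n Q f) q volume ≤ C * eLpNorm f p (unitCube d) := by
  rcases eq_or_ne (eLpNorm f p (unitCube d)) 0 with h0 | h0
  · rw [eLpNorm_eq_zero_iff hf.aestronglyMeasurable hp0] at h0
    have hzero : extOp d n Q (0 : (Fin d → ℝ) → ℂ) = 0 := by
      simpa using extOp_smul Q 0 (0 : (Fin d → ℝ) → ℂ)
    simp [extOp_congr_ae h0, hzero]
  rcases eq_or_ne (eLpNorm f p (unitCube d)) ⊤ with htop | htop
  · rw [htop, ENNReal.mul_top hC0]
    exact le_top
  set N := (eLpNorm f p (unitCube d)).toReal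
  have hN : 0 < N := ENNReal.toReal_pos h0 htop
  have hinv : ‖(N⁻¹ : ℂ)‖ₑ = (eLpNorm f p (unitCube d))⁻¹ := by
    rw [← ofReal_norm, norm_inv, Complex.norm_of_nonneg hN.le, ENNReal.ofReal_inv_of_pos hN,
      ENNReal.ofReal_toReal htop]
  have hscaled := hC ((N⁻¹ : ℂ) • f) (hf.const_smul _) (by
    rw [eLpNorm_const_smul, hinv, ENNReal.inv_mul_cancel h0 htop])
  rwa [extOp_smul, eLpNorm_const_smul, hinv, mul_comm, ← div_eq_mul_inv,
    ENNReal.div_le_iff h0 htop] at hscaled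

lemma IsRestrictedType.exists_eLpNorm_extOp_le (hA : IsRestrictedType Q r A)
    (hAtop : A ≠ ⊤) (hQ : Measurable Q) (hr : 1 ≤ r) (hp1 : 1 ≤ p) (hp : p ≠ ⊤) (hq : q ≠ ⊤)
    (hrq : r ≤ q.toReal) (hpq : 1 < p.toReal * ((q.toReal - r + 1) / q.toReal)) :
    ∃ C : ℝ≥0∞, C ≠ ⊤ ∧ ∀ f : (Fin d → ℝ) → ℂ, Measurable f →
      eLpNorm (extOp d n Q f) q volume ≤ C * eLpNorm f p (unitCube d) := by
  obtain ⟨C, hC, hball⟩ :=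
    hA.exists_eLpNorm_extOp_le_of_eLpNorm_le_one hAtop hQ hr hp1 hp hq hrq hpq
  exact ⟨C + 1, by finiteness, fun f hf ↦ eLpNorm_extOp_le_mul_of_forall_eLpNorm_le_one
    (one_pos.trans_le hp1).ne' (fun g hg hg1 ↦ (hball g hg hg1).trans le_self_add) (by simp) hf⟩

end Interpolation

section Coordinates

lemma lintegral_pi_fin_succ {n : ℕ} (i : Fin (n + 1)) {F : (Fin (n + 1) → ℝ) → ℝ≥0∞}
    (hF : Measurable F) : ∫⁻ x, F x = ∫⁻ t, ∫⁻ y, F (i.insertNth t y) := by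
  have hsymm := (volume_preserving_piFinSuccAbove (fun _ : Fin (n + 1) ↦ ℝ) i).symm
  rw [← hsymm.lintegral_comp hF, Measure.volume_eq_prod,
    lintegral_prod _ (Measurable.aemeasurable (by fun_prop))]
  rfl

lemma measurePreserving_vecCons₂ :
    MeasurePreserving (fun z : ℝ × ℝ ↦ (![z.1, z.2] : Fin 2 → ℝ)) :=
  (volume_preserving_finTwoArrow ℝ).symm

lemma measurableEmbedding_vecCons₂ :
    MeasurableEmbedding fun z : ℝ × ℝ ↦ (![z.1, z.2] : Fin 2 → ℝ) :=
  (MeasurableEquiv.finTwoArrow (α := ℝ)).symm.measurableEmbedding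

lemma lintegral_pi_fin_four {F : (Fin 4 → ℝ) → ℝ≥0∞} (hF : Measurable F) :
    ∫⁻ x, F x = ∫⁻ w : ℝ × ℝ, ∫⁻ t, ∫⁻ x, F ![x, w.2, t, w.1] := by
  have hcoord (u y t x : ℝ) : Fin.insertNth (α := fun _ ↦ ℝ) 3 u
      (Fin.insertNth (α := fun _ ↦ ℝ) 1 y ![x, t]) = ![x, y, t, u] := by
    ext i
    fin_cases i <;> rfl
  have hvec : Measurable fun v : ((ℝ × ℝ) × ℝ) × ℝ ↦ F ![v.2, v.1.1.2, v.1.2, v.1.1.1] :=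
    hF.comp <| measurable_pi_iff.2 fun i ↦ by
      fin_cases i
      exacts [measurable_snd, measurable_fst.fst.snd, measurable_fst.snd, measurable_fst.fst.fst]
  have hinsert {m : ℕ} (i : Fin (m + 1)) (u : ℝ) :
      Measurable (Fin.insertNth (α := fun _ ↦ ℝ) i u) :=
    (MeasurableEquiv.piFinSuccAbove (fun _ : Fin (m + 1) ↦ ℝ) i).symm.measurable.comp
      measurable_prodMk_left
  rw [lintegral_pi_fin_succ 3 hF, Measure.volume_eq_prod,
    lintegral_prod _ (hvec.lintegral_prod_right'.lintegral_prod_right'.aemeasurable)]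
  refine lintegral_congr fun u ↦ ?_
  refine (lintegral_pi_fin_succ 1 (hF.comp (hinsert 3 u))).trans (lintegral_congr fun y ↦ ?_)
  have hFuy := (hF.comp (hinsert 3 u)).comp (hinsert 1 y)
  refine (measurePreserving_vecCons₂.lintegral_comp hFuy).symm.trans ?_
  rw [Measure.volume_eq_prod]
  refine (lintegral_prod_symm _
    (hFuy.comp measurePreserving_vecCons₂.measurable).aemeasurable).trans ?_
  simp only [Function.comp_apply, hcoord]

end Coordinates

section Restriction

/-- The quadratic map `ξ ↦ (ξ₁², ξ₁ ξ₂)` on the plane. -/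
def squareProd : (Fin 2 → ℝ) → Fin 2 → ℝ := fun ξ j ↦ if j = 0 then ξ 0 ^ 2 else ξ 0 * ξ 1

lemma measurable_squareProd : Measurable squareProd := by
  refine measurable_pi_lambda _ fun j ↦ ?_
  by_cases hj : j = 0 <;> simp only [squareProd, hj, if_true, if_false] <;> fun_prop

lemma phase_squareProd (x : Fin (2 + 2) → ℝ) (ξ : Fin 2 → ℝ) :
    phase squareProd x ξ = x 0 * ξ 0 + x 1 * ξ 1 + x 2 * ξ 0 ^ 2 + x 3 * (ξ 0 * ξ 1) := by
  simp [phase, squareProd, Fin.sum_univ_two, add_assoc]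

lemma extOp_squareProd_eq_planeExt (f : (Fin 2 → ℝ) → ℂ) (x : Fin (2 + 2) → ℝ) :
    extOp 2 2 squareProd f x
      = planeExt (fun z ↦ (Icc 0 1).indicator f ![z.1, z.2]) (x 0) (x 1) (x 2) (x 3) := by
  rw [extOp_eq, ← integral_indicator measurableSet_Icc,
    ← measurePreserving_vecCons₂.integral_comp measurableEmbedding_vecCons₂, planeExt]
  congr with z
  rw [indicator_mul_right, phase_squareProd]
  rfl

lemma exists_isRestrictedType_squareProd {r : ℝ} (hr : 5 < r) :
    ∃ A : ℝ≥0∞, A ≠ ⊤ ∧ IsRestrictedType squareProd r A := by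
  obtain ⟨A, hA, hplane⟩ := exists_lintegral_enorm_planeExt_rpow_le hr
  refine ⟨A, hA, fun f hf hf1 ↦ ?_⟩
  set g : ℝ × ℝ → ℂ := fun z ↦ (Icc 0 1).indicator f ![z.1, z.2]
  have hg : Measurable g :=
    (hf.indicator measurableSet_Icc).comp measurePreserving_vecCons₂.measurable
  have hg1 (z) : ‖g z‖ₑ ≤ 1 := (enorm_indicator_le_enorm_self _ _).trans (hf1 _)
  have hsupp : Function.support g ⊆ Icc 0 1 := fun z hz ↦ by
    have hmem : ![z.1, z.2] ∈ Icc (0 : Fin 2 → ℝ) 1 := (support_indicator_subset hz :)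
    exact ⟨⟨hmem.1 0, hmem.1 1⟩, ⟨hmem.2 0, hmem.2 1⟩⟩
  calc ∫⁻ x, ‖extOp 2 2 squareProd f x‖ₑ ^ r
      = ∫⁻ w : ℝ × ℝ, ∫⁻ t, ∫⁻ x, ‖planeExt g x w.2 t w.1‖ₑ ^ r := by
        rw [lintegral_pi_fin_four ((measurable_extOp measurable_squareProd hf).enorm.pow_const r)]
        simp_rw [extOp_squareProd_eq_planeExt]
        rfl
    _ ≤ A * ∫⁻ z, ‖g z‖ₑ ^ 2 := hplane g hg hg1 hsupp
    _ = A * ∫⁻ ξ, ‖f ξ‖ₑ ^ 2 ∂unitCube 2 := by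
        rw [← lintegral_indicator measurableSet_Icc,
          ← measurePreserving_vecCons₂.lintegral_comp_emb measurableEmbedding_vecCons₂]
        congr with z
        by_cases hz : ![z.1, z.2] ∈ Icc (0 : Fin 2 → ℝ) 1 <;> simp [g, hz]
    _ ≤ A * unitCube 2 (Function.support f) := by
        refine mul_le_mul_right (lintegral_le_meas (fun ξ ↦ pow_le_one' (hf1 ξ) 2) fun ξ hξ ↦ ?_) A
        rw [Function.notMem_support.1 hξ, enorm_zero, zero_pow two_ne_zero]

lemma exists_exponents_of_inv_add_four_div_lt_one {p q : ℝ≥0∞} (hq : q ≠ ⊤) (hq5 : 5 < q)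
    (hpq : 1 / p + 4 / q < 1) : ∃ (P : ℝ≥0∞) (r : ℝ), 1 ≤ P ∧ P ≤ p ∧ P ≠ ⊤ ∧ 5 < r ∧
      r ≤ q.toReal ∧ 1 < P.toReal * ((q.toReal - r + 1) / q.toReal) := by
  have hq5' : 5 < q.toReal := by
    simpa using (ENNReal.toReal_lt_toReal (by simp) hq).2 hq5
  obtain ⟨c, hpc, hc⟩ := exists_between (lt_tsub_iff_right.2 hpq)
  have hc1 : c < 1 := hc.trans_le tsub_le_self
  have hc0 : 0 < c := pos_of_gt hpc
  have hctop := hc1.ne_top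
  have hcpos : 0 < c.toReal := ENNReal.toReal_pos hc0.ne' hctop
  have hc' : c.toReal * q.toReal < q.toReal - 4 := by
    have hsum := (ENNReal.toReal_lt_toReal (by finiteness) ENNReal.one_ne_top).2
      (lt_tsub_iff_right.1 hc)
    rw [ENNReal.toReal_add hctop (by finiteness), ENNReal.toReal_div, ENNReal.toReal_ofNat,
      ENNReal.toReal_one, ← lt_sub_iff_add_lt, one_sub_div (by linarith : q.toReal ≠ 0),
      lt_div_iff₀ (by linarith)] at hsum
    exact hsum
  obtain ⟨r, hr5, hr⟩ := exists_between <|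
    lt_min hq5' (by linarith : 5 < q.toReal + 1 - c.toReal * q.toReal)
  refine ⟨c⁻¹, r, ENNReal.one_le_inv.2 hc1.le, ?_, ENNReal.inv_ne_top.2 hc0.ne', hr5,
    (hr.trans_le (min_le_left _ _)).le, ?_⟩
  · rw [one_div] at hpc
    exact ENNReal.inv_le_iff_inv_le.1 hpc.le
  · have hr_lt := hr.trans_le (min_le_right _ _)
    rw [ENNReal.toReal_inv, ← div_eq_inv_mul, one_lt_div hcpos, lt_div_iff₀ (by linarith)]
    linarith

theorem exists_eLpNorm_extOp_squareProd_le {p q : ℝ≥0∞} (hp : 1 ≤ p) (hq5 : 5 < q)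
    (hpq : 1 / p + 4 / q < 1) : ∃ C : ℝ≥0∞, C < ⊤ ∧ ∀ f : (Fin 2 → ℝ) → ℂ, Measurable f →
      eLpNorm (extOp 2 2 squareProd f) q volume ≤ C * eLpNorm f p volume := by
  have hrestrict (f : (Fin 2 → ℝ) → ℂ) : eLpNorm f p (unitCube 2) ≤ eLpNorm f p volume :=
    eLpNorm_restrict_le f p volume _
  rcases eq_or_ne q ⊤ with rfl | hq
  · refine ⟨1, ENNReal.one_lt_top, fun f hf ↦ ?_⟩
    rw [one_mul]
    exact (eLpNorm_top_extOp_le squareProd f).trans <|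
      (eLpNorm_le_eLpNorm_of_exponent_le hp hf.aestronglyMeasurable).trans (hrestrict f)
  · obtain ⟨P, r, hP1, hPp, hP, hr5, hrq, hlt⟩ :=
      exists_exponents_of_inv_add_four_div_lt_one hq hq5 hpq
    obtain ⟨A, hA, htype⟩ := exists_isRestrictedType_squareProd hr5
    obtain ⟨C, hC, hbound⟩ := htype.exists_eLpNorm_extOp_le hA measurable_squareProd
      (by linarith) hP1 hP hq hrq hlt
    exact ⟨C, hC.lt_top, fun f hf ↦ (hbound f hf).trans <| mul_le_mul_right
      ((eLpNorm_le_eLpNorm_of_exponent_le hPp hf.aestronglyMeasurable).trans (hrestrict f)) C⟩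

end Restriction

section LowerBounds

lemma mul_measure_le_lintegral {α : Type*} [MeasurableSpace α] {μ : Measure α} {s : Set α}
    {F : α → ℝ≥0∞} {K : ℝ≥0∞} (hs : MeasurableSet s) (h : ∀ a ∈ s, K ≤ F a) :
    K * μ s ≤ ∫⁻ a, F a ∂μ := by
  calc K * μ s = ∫⁻ _ in s, K ∂μ := (setLIntegral_const s K).symm
    _ ≤ ∫⁻ a in s, F a ∂μ := setLIntegral_mono' hs h
    _ ≤ ∫⁻ a, F a ∂μ := setLIntegral_le_lintegral s F

lemma ofReal_mul_measure_rpow_le_eLpNorm {α : Type*} [MeasurableSpace α] {μ : Measure α}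
    {s : Set α} {F : α → ℂ} {q : ℝ≥0∞} {K : ℝ} (hs : MeasurableSet s) (hμ : μ s ≠ 0) (hq : q ≠ 0)
    (hK : 0 ≤ K) (h : ∀ a ∈ s, ENNReal.ofReal K ≤ ‖F a‖ₑ) :
    ENNReal.ofReal K * μ s ^ (1 / q.toReal) ≤ eLpNorm F q μ := by
  rw [← Real.enorm_of_nonneg hK, ← eLpNorm_indicator_const' hs hμ hq]
  refine eLpNorm_mono_enorm fun a ↦ ?_
  by_cases ha : a ∈ s
  · rw [indicator_of_mem ha, Real.enorm_of_nonneg hK]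
    exact h a ha
  · simp [ha]

lemma one_half_le_re_fourierChar {t : ℝ} (ht : |t| ≤ 1 / 8) : 1 / 2 ≤ (𝐞 t : ℂ).re := by
  have hπ := Real.pi_pos
  rw [Real.fourierChar_apply, Complex.exp_ofReal_mul_I_re, ← Real.cos_abs, abs_mul,
    abs_of_pos (by positivity), ← Real.cos_pi_div_three]
  exact Real.cos_le_cos_of_nonneg_of_le_pi (by positivity) (by linarith) (by nlinarith)

variable {d n : ℕ} {Q : (Fin d → ℝ) → Fin n → ℝ} {S : Set (Fin d → ℝ)}

lemma extOp_indicator_one (Q : (Fin d → ℝ) → Fin n → ℝ) (hS : MeasurableSet S)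
    (x : Fin (d + n) → ℝ) :
    extOp d n Q (S.indicator 1) x = ∫ ξ in S, (𝐞 (phase Q x ξ) : ℂ) ∂unitCube d := by
  rw [extOp_eq, ← integral_indicator hS]
  congr with ξ
  by_cases hξ : ξ ∈ S <;> simp [hξ]

lemma integrable_fourierChar_phase (hQ : Measurable Q) (x : Fin (d + n) → ℝ) :
    Integrable (fun ξ ↦ (𝐞 (phase Q x ξ) : ℂ)) (unitCube d) := by
  simpa using integrable_extOp_integrand hQ (integrable_const 1) x

lemma extOp_indicator_biUnion {ι : Type*} {ε : Finset ι} {S : ι → Set (Fin d → ℝ)}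
    (hQ : Measurable Q) (hS : ∀ k, MeasurableSet (S k))
    (hdisj : Pairwise (Function.onFun Disjoint S)) (x : Fin (d + n) → ℝ) :
    extOp d n Q ((⋃ k ∈ ε, S k).indicator 1) x = ∑ k ∈ ε, extOp d n Q ((S k).indicator 1) x := by
  simp only [extOp_indicator_one Q (ε.measurableSet_biUnion fun k _ ↦ hS k),
    extOp_indicator_one Q (hS _)]
  exact integral_biUnion_finset ε (fun k _ ↦ hS k) (hdisj.set_pairwise _)
    fun k _ ↦ (integrable_fourierChar_phase hQ x).integrableOn

lemma measure_div_two_le_enorm_extOp_indicator (hQ : Measurable Q) (hS : MeasurableSet S)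
    {x : Fin (d + n) → ℝ} {c : ℝ} (hc : ∀ ξ ∈ S, |phase Q x ξ - c| ≤ 1 / 8) :
    unitCube d S / 2 ≤ ‖extOp d n Q (S.indicator 1) x‖ₑ := by
  have hsplit (ξ) : (𝐞 (phase Q x ξ - c) : ℂ) = (𝐞 (-c) : ℂ) * 𝐞 (phase Q x ξ) := by
    rw [← coe_fourierChar_add, neg_add_eq_sub]
  have hint : IntegrableOn (fun ξ ↦ (𝐞 (phase Q x ξ - c) : ℂ)) S (unitCube d) := by
    simp_rw [hsplit]
    exact ((integrable_fourierChar_phase hQ x).const_mul _).integrableOn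
  have hre : (unitCube d).real S / 2 ≤ ‖extOp d n Q (S.indicator 1) x‖ :=
    calc (unitCube d).real S / 2 = ∫ _ in S, (1 / 2 : ℝ) ∂unitCube d := by
          rw [setIntegral_const, smul_eq_mul, mul_one_div]
      _ ≤ ∫ ξ in S, (𝐞 (phase Q x ξ - c) : ℂ).re ∂unitCube d :=
          setIntegral_mono_on (integrable_const _) hint.re hS
            fun ξ hξ ↦ one_half_le_re_fourierChar (hc ξ hξ)
      _ = (∫ ξ in S, (𝐞 (phase Q x ξ - c) : ℂ) ∂unitCube d).re := integral_re hint
      _ ≤ ‖∫ ξ in S, (𝐞 (phase Q x ξ - c) : ℂ) ∂unitCube d‖ := Complex.re_le_norm _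
      _ = ‖extOp d n Q (S.indicator 1) x‖ := by
          simp_rw [hsplit]
          rw [integral_const_mul, norm_mul, Circle.norm_coe, one_mul, extOp_indicator_one Q hS]
  calc unitCube d S / 2 = ENNReal.ofReal ((unitCube d).real S / 2) := by
        rw [ENNReal.ofReal_div_of_pos two_pos, ofReal_measureReal, ENNReal.ofReal_ofNat]
    _ ≤ ENNReal.ofReal ‖extOp d n Q (S.indicator 1) x‖ := ENNReal.ofReal_le_ofReal hre
    _ = ‖extOp d n Q (S.indicator 1) x‖ₑ := ofReal_norm _

lemma eLpNorm_indicator_one_le_one (hS : S ⊆ Icc 0 1) (p : ℝ≥0∞) :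
    eLpNorm (S.indicator (1 : (Fin d → ℝ) → ℂ)) p volume ≤ 1 := by
  have hvol : volume S ≤ 1 :=
    (measure_mono hS).trans_eq (by simp [Real.volume_Icc_pi])
  refine (eLpNorm_indicator_const_le (1 : ℂ) p).trans ?_
  rw [enorm_one, one_mul]
  exact ENNReal.rpow_le_one hvol (by positivity)

end LowerBounds

section Strips

/-- The `k`-th of the `n` vertical strips of width `1 / n` of the unit square. -/
def strip (n k : ℕ) : Set (Fin 2 → ℝ) :=
  {ξ | ξ 0 ∈ Ico ((k : ℝ) / n) ((k + 1) / n) ∧ ξ 1 ∈ Icc 0 1}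

variable {n k : ℕ}

lemma strip_eq_pi (n k : ℕ) :
    strip n k = univ.pi ![Ico ((k : ℝ) / n) ((k + 1) / n), Icc 0 1] := by
  ext ξ
  simp [strip, Set.mem_pi, Fin.forall_fin_two]

lemma measurableSet_strip (n k : ℕ) : MeasurableSet (strip n k) := by
  rw [strip_eq_pi]
  refine .univ_pi fun i ↦ ?_
  fin_cases i
  exacts [measurableSet_Ico, measurableSet_Icc]

lemma pairwise_disjoint_strip (n : ℕ) : Pairwise (Function.onFun Disjoint (strip n)) := by
  have hmono : Monotone fun k : ℕ ↦ (k : ℝ) / n := fun _ _ h ↦ by beta_reduce; gcongr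
  intro k l hkl
  refine Disjoint.mono ?_ ?_ ((hmono.pairwise_disjoint_on_Ico_succ hkl).preimage fun ξ ↦ ξ 0)
  all_goals
    intro ξ hξ
    simpa [Nat.succ_eq_succ] using hξ.1

lemma strip_subset (hk : k < n) : strip n k ⊆ Icc 0 1 := by
  have hn : (0 : ℝ) < n := by exact_mod_cast k.zero_le.trans_lt hk
  have hk1 : ((k : ℝ) + 1) / n ≤ 1 := by
    rw [div_le_one hn]
    exact_mod_cast hk
  rintro ξ ⟨h0, h1⟩
  refine ⟨Fin.forall_fin_two.2 ⟨?_, h1.1⟩, Fin.forall_fin_two.2 ⟨h0.2.le.trans hk1, h1.2⟩⟩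
  exact le_trans (by positivity) h0.1

lemma volume_strip (n k : ℕ) : volume (strip n k) = ENNReal.ofReal (1 / n) := by
  rw [strip_eq_pi, volume_pi_pi, Fin.prod_univ_two]
  simp [← sub_div]

lemma unitCube_strip (hk : k < n) : unitCube 2 (strip n k) = ENNReal.ofReal (1 / n) := by
  rw [Measure.restrict_eq_self _ (strip_subset hk), volume_strip]

lemma abs_phase_sub_le_of_mem_strip (hn : 0 < n) {x : Fin (2 + 2) → ℝ} {ξ : Fin 2 → ℝ}
    (hξ : ξ ∈ strip n k)
    (h0 : |x 0 + 2 * (k / n) * x 2| ≤ n / 32) (h1 : |x 1 + k / n * x 3| ≤ 1 / 32)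
    (h2 : |x 2| ≤ n ^ 2 / 32) (h3 : |x 3| ≤ n / 32) :
    |phase squareProd x ξ - (x 0 * (k / n) + x 2 * (k / n) ^ 2)| ≤ 1 / 8 := by
  obtain ⟨⟨hk0, hk1⟩, hη0, hη1⟩ := hξ
  have hn' : (0 : ℝ) < n := by exact_mod_cast hn
  set a : ℝ := k / n
  set s := ξ 0 - a with hs
  have hs0 : 0 ≤ s := sub_nonneg.2 hk0
  have hs1 : n * s ≤ 1 := by
    have hs_le : s ≤ 1 / n := by
      rw [hs, sub_le_iff_le_add, ← add_div, add_comm]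
      exact hk1.le
    rwa [le_div_iff₀' hn'] at hs_le
  have hphase : phase squareProd x ξ - (x 0 * a + x 2 * a ^ 2) =
      (x 0 + 2 * a * x 2) * s + x 2 * s ^ 2 + (x 1 + a * x 3) * ξ 1 + x 3 * (s * ξ 1) := by
    rw [phase_squareProd, hs]
    ring
  have hterm {u v M : ℝ} (hu : |u| ≤ M / 32) (hv : 0 ≤ v) (hMv : M * v ≤ 1) :
      |u * v| ≤ 1 / 32 := by
    rw [abs_mul, abs_of_nonneg hv]
    nlinarith
  have hsq : (n : ℝ) ^ 2 * s ^ 2 ≤ 1 := by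
    rw [← mul_pow]
    exact pow_le_one₀ (by positivity) hs1
  have hsη : n * (s * ξ 1) ≤ 1 := by
    rw [← mul_assoc]
    exact mul_le_one₀ hs1 hη0 hη1
  have hle0 := hterm h0 hs0 hs1
  have hle1 := hterm h1 hη0 (by rwa [one_mul])
  have hle2 := hterm h2 (sq_nonneg s) hsq
  have hle3 := hterm h3 (mul_nonneg hs0 hη0) hsη
  rw [hphase]
  linarith [abs_add_le ((x 0 + 2 * a * x 2) * s + x 2 * s ^ 2 + (x 1 + a * x 3) * ξ 1)
      (x 3 * (s * ξ 1)), abs_add_le ((x 0 + 2 * a * x 2) * s + x 2 * s ^ 2)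
      ((x 1 + a * x 3) * ξ 1), abs_add_le ((x 0 + 2 * a * x 2) * s) (x 2 * s ^ 2)]

lemma ofReal_le_enorm_extOp_strip (hk : k < n) {x : Fin (2 + 2) → ℝ}
    (h0 : |x 0 + 2 * (k / n) * x 2| ≤ n / 32) (h1 : |x 1 + k / n * x 3| ≤ 1 / 32)
    (h2 : |x 2| ≤ n ^ 2 / 32) (h3 : |x 3| ≤ n / 32) :
    ENNReal.ofReal (1 / (2 * n)) ≤ ‖extOp 2 2 squareProd ((strip n k).indicator 1) x‖ₑ := by
  have hn : 0 < n := k.zero_le.trans_lt hk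
  calc ENNReal.ofReal (1 / (2 * n)) = unitCube 2 (strip n k) / 2 := by
        rw [unitCube_strip hk, ← ENNReal.ofReal_ofNat 2, ← ENNReal.ofReal_div_of_pos two_pos,
          div_div, mul_comm]
    _ ≤ _ := measure_div_two_le_enorm_extOp_indicator measurable_squareProd
        (measurableSet_strip n k) fun ξ hξ ↦ abs_phase_sub_le_of_mem_strip hn hξ h0 h1 h2 h3

end Strips

section Necessity

variable {p q C : ℝ≥0∞}

lemma nonpos_of_forall_natCast_rpow_le {s K : ℝ} (h : ∀ n : ℕ, 0 < n → (n : ℝ) ^ s ≤ K) :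
    s ≤ 0 := by
  by_contra! hs
  obtain ⟨n, hn, hnK⟩ := ((eventually_gt_atTop 0).and (((tendsto_rpow_atTop hs).comp
    (tendsto_natCast_atTop_atTop (R := ℝ))).eventually_gt_atTop K)).exists
  exact (h n hn).not_gt hnK

lemma ofReal_mul_rpow_le_eLpNorm_extOp_strip_zero {n : ℕ} (hn : 0 < n) (hq : q ≠ 0) :
    ENNReal.ofReal (1 / (2 * n)) * ENNReal.ofReal ((n / 16) ^ 4) ^ (1 / q.toReal) ≤
      eLpNorm (extOp 2 2 squareProd ((strip n 0).indicator 1)) q volume := by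
  have hn' : (0 : ℝ) < n := by exact_mod_cast hn
  set r : Fin (2 + 2) → ℝ := ![n / 32, 1 / 32, n ^ 2 / 32, n / 32] with hr
  have hvol : volume (Icc (-r) r) = ENNReal.ofReal ((n / 16) ^ 4) := by
    rw [Real.volume_Icc_pi, Fin.prod_univ_four]
    simp only [hr, Pi.neg_apply, Matrix.cons_val, sub_neg_eq_add]
    rw [← ENNReal.ofReal_mul (by positivity), ← ENNReal.ofReal_mul (by positivity),
      ← ENNReal.ofReal_mul (by positivity)]
    congr 1
    ring
  rw [← hvol]
  refine ofReal_mul_measure_rpow_le_eLpNorm measurableSet_Icc ?_ hq (by positivity) fun x hx ↦ ?_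
  · rw [hvol]
    positivity
  · have habs (i) : |x i| ≤ r i := abs_le.2 ⟨hx.1 i, hx.2 i⟩
    refine ofReal_le_enorm_extOp_strip hn ?_ ?_ (habs 2) (habs 3)
    · simpa [hr] using habs 0
    · simpa [hr] using habs 1

lemma one_div_eq_ofReal_one_div_toReal {r : ℝ≥0∞} (hr : r ≠ 0) :
    1 / r = ENNReal.ofReal (1 / r.toReal) := by
  rw [one_div, one_div, ← ENNReal.toReal_inv, ENNReal.ofReal_toReal (ENNReal.inv_ne_top.2 hr)]

theorem one_div_add_four_div_le_one_of_eLpNorm_extOp_indicator_le (hp : p ≠ 0) (hq : q ≠ 0)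
    (hC : C ≠ ⊤) (h : ∀ S ⊆ Icc 0 1, MeasurableSet S →
      eLpNorm (extOp 2 2 squareProd (S.indicator 1)) q volume ≤
        C * eLpNorm (S.indicator (1 : (Fin 2 → ℝ) → ℂ)) p volume) :
    1 / p + 4 / q ≤ 1 := by
  set α := 1 / p.toReal
  set β := 1 / q.toReal
  have hβ0 : 0 ≤ β := by positivity
  have hpow (n : ℕ) (hn : 0 < n) : (n : ℝ) ^ (α + 4 * β - 1) ≤ 2 * 16 ^ (4 * β) * C.toReal := by
    have hn' : (0 : ℝ) < n := by exact_mod_cast hn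
    have hnorm : eLpNorm ((strip n 0).indicator (1 : (Fin 2 → ℝ) → ℂ)) p volume ≤
        ENNReal.ofReal ((1 / n) ^ α) := by
      refine (eLpNorm_indicator_const_le (1 : ℂ) p).trans_eq ?_
      rw [enorm_one, one_mul, volume_strip, ENNReal.ofReal_rpow_of_pos (by positivity)]
    have hbox := (ofReal_mul_rpow_le_eLpNorm_extOp_strip_zero hn hq).trans <|
      (h _ (strip_subset hn) (measurableSet_strip n 0)).trans (mul_le_mul_right hnorm C)
    rw [ENNReal.ofReal_rpow_of_nonneg (by positivity) hβ0, ← ENNReal.ofReal_toReal hC,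
      ← ENNReal.ofReal_mul (by positivity), ← ENNReal.ofReal_mul (by positivity),
      ENNReal.ofReal_le_ofReal_iff (by positivity), ← Real.rpow_natCast, ← Real.rpow_mul
      (by positivity), Real.div_rpow hn'.le (by norm_num), Real.div_rpow zero_le_one hn'.le,
      Real.one_rpow, Nat.cast_ofNat] at hbox
    rw [Real.rpow_sub_one hn'.ne', Real.rpow_add hn']
    field_simp at hbox ⊢
    linarith
  have hle := nonpos_of_forall_natCast_rpow_le hpow
  rw [div_eq_mul_one_div 4 q, one_div_eq_ofReal_one_div_toReal hp,
    one_div_eq_ofReal_one_div_toReal hq, ← ENNReal.ofReal_ofNat 4,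
    ← ENNReal.ofReal_mul (by norm_num), ← ENNReal.ofReal_add (by positivity) (by positivity),
    ENNReal.ofReal_le_one]
  linarith

lemma enorm_div_two_rpow_le {E : Type*} [SeminormedAddCommGroup E] (u w : E) {r : ℝ}
    (hr : 0 ≤ r) : (‖w‖ₑ / 2) ^ r ≤ ‖u‖ₑ ^ r + ‖w + u‖ₑ ^ r := by
  have hmax : ‖w‖ₑ / 2 ≤ max ‖u‖ₑ ‖w + u‖ₑ := by
    refine ENNReal.div_le_of_le_mul ?_
    calc ‖w‖ₑ = ‖w + u - u‖ₑ := by rw [add_sub_cancel_right]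
      _ ≤ ‖w + u‖ₑ + ‖u‖ₑ := enorm_sub_le
      _ ≤ max ‖u‖ₑ ‖w + u‖ₑ * 2 := by
        rw [mul_two]
        exact add_le_add (le_max_right _ _) (le_max_left _ _)
  rcases le_max_iff.1 hmax with hu | hw
  · exact (ENNReal.rpow_le_rpow hu hr).trans le_self_add
  · exact (ENNReal.rpow_le_rpow hw hr).trans le_add_self

lemma two_pow_mul_enorm_div_two_rpow_le_sum_powerset {ι E : Type*}
    [SeminormedAddCommGroup E] {s : Finset ι} {j : ι} (hj : j ∈ s) (v : ι → E) {r : ℝ}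
    (hr : 0 ≤ r) :
    2 ^ (s.card - 1) * (‖v j‖ₑ / 2) ^ r ≤ ∑ ε ∈ s.powerset, ‖∑ k ∈ ε, v k‖ₑ ^ r := by
  classical
  rw [← Finset.insert_erase hj, Finset.sum_powerset_insert (Finset.notMem_erase j s),
    ← Finset.sum_add_distrib, Finset.insert_erase hj]
  calc 2 ^ (s.card - 1) * (‖v j‖ₑ / 2) ^ r
      = ∑ _ ∈ (s.erase j).powerset, (‖v j‖ₑ / 2) ^ r := by
        rw [Finset.sum_const, Finset.card_powerset, Finset.card_erase_of_mem hj, nsmul_eq_mul]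
        norm_cast
    _ ≤ _ := Finset.sum_le_sum fun ε hε ↦ by
        have hjε : j ∉ ε := fun h ↦ Finset.notMem_erase j s (Finset.mem_powerset.1 hε h)
        rw [Finset.sum_insert hjε]
        exact enorm_div_two_rpow_le _ _ hr

lemma exists_nat_lt_abs_add_div_mul_le {n : ℕ} {u y : ℝ} (hn : 0 < n)
    (hu : u ∈ Icc ((n : ℝ) / 64) (n / 32)) (hy : y ∈ Icc (-(n / 128) : ℝ) 0) :
    ∃ j < n, |y + j / n * u| ≤ 1 / 32 := by
  have hn' : (0 : ℝ) < n := by exact_mod_cast hn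
  have hu0 : 0 < u := lt_of_lt_of_le (by positivity) hu.1
  have hquot : 0 ≤ -y * n / u := div_nonneg (mul_nonneg (neg_nonneg.2 hy.2) hn'.le) hu0.le
  refine ⟨⌊-y * n / u⌋₊, ?_, ?_⟩
  · rw [Nat.floor_lt hquot, div_lt_iff₀ hu0]
    nlinarith [hu.1, hy.1]
  · have hle := Nat.floor_le hquot
    have hlt := Nat.lt_floor_add_one (-y * n / u)
    rw [le_div_iff₀ hu0] at hle
    rw [div_lt_iff₀ hu0] at hlt
    have hsum : y + ⌊-y * n / u⌋₊ / n * u = (y * n + ⌊-y * n / u⌋₊ * u) / n := by field_simp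
    rw [hsum, abs_le, le_div_iff₀ hn', div_le_iff₀ hn']
    constructor <;> linarith [hu.2]

/-- The union of the strips `strip n k` with `k ∈ ε`. -/
def stripUnion (n : ℕ) (ε : Finset ℕ) : Set (Fin 2 → ℝ) := ⋃ k ∈ ε, strip n k

lemma measurableSet_stripUnion (n : ℕ) (ε : Finset ℕ) : MeasurableSet (stripUnion n ε) :=
  ε.measurableSet_biUnion fun k _ ↦ measurableSet_strip n k

lemma stripUnion_subset {n : ℕ} {ε : Finset ℕ} (hε : ε ⊆ Finset.range n) :
    stripUnion n ε ⊆ Icc 0 1 :=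
  iUnion₂_subset fun _ hk ↦ strip_subset (Finset.mem_range.1 (hε hk))

/-- The sum of `|E 1_S|^r` over the unions `S` of strips of width `1 / n`, which is `2 ^ n` times
the average over random such unions. -/
noncomputable def stripPowerSum (n : ℕ) (r : ℝ) (x : Fin (2 + 2) → ℝ) : ℝ≥0∞ :=
  ∑ ε ∈ (Finset.range n).powerset,
    ‖extOp 2 2 squareProd ((stripUnion n ε).indicator 1) x‖ₑ ^ r

lemma measurable_enorm_extOp_stripUnion_rpow (n : ℕ) (ε : Finset ℕ) (r : ℝ) :
    Measurable fun x ↦ ‖extOp 2 2 squareProd ((stripUnion n ε).indicator 1) x‖ₑ ^ r :=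
  (measurable_extOp measurable_squareProd
    (measurable_one.indicator (measurableSet_stripUnion n ε))).enorm.pow_const r

lemma measurable_stripPowerSum (n : ℕ) (r : ℝ) : Measurable (stripPowerSum n r) :=
  Finset.measurable_fun_sum _ fun ε _ ↦ measurable_enorm_extOp_stripUnion_rpow n ε r

lemma two_pow_mul_ofReal_le_stripPowerSum {n j : ℕ} (hj : j < n) {r : ℝ} (hr : 0 ≤ r)
    {x : Fin (2 + 2) → ℝ} (h0 : |x 0 + 2 * (j / n) * x 2| ≤ n / 32)
    (h1 : |x 1 + j / n * x 3| ≤ 1 / 32) (h2 : |x 2| ≤ n ^ 2 / 32) (h3 : |x 3| ≤ n / 32) :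
    2 ^ (n - 1) * ENNReal.ofReal ((1 / (4 * n)) ^ r) ≤ stripPowerSum n r x := by
  have hn : (0 : ℝ) < n := by exact_mod_cast j.zero_le.trans_lt hj
  have hstrip : ENNReal.ofReal (1 / (4 * n)) ≤
      ‖extOp 2 2 squareProd ((strip n j).indicator 1) x‖ₑ / 2 := by
    refine le_of_eq_of_le ?_
      (ENNReal.div_le_div_right (ofReal_le_enorm_extOp_strip hj h0 h1 h2 h3) 2)
    rw [← ENNReal.ofReal_ofNat 2, ← ENNReal.ofReal_div_of_pos two_pos, div_div]
    ring_nf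
  have havg := two_pow_mul_enorm_div_two_rpow_le_sum_powerset (Finset.mem_range.2 hj)
    (fun k ↦ extOp 2 2 squareProd ((strip n k).indicator 1) x) hr
  simp only [Finset.card_range, ← extOp_indicator_biUnion measurable_squareProd
    (measurableSet_strip n) (pairwise_disjoint_strip n)] at havg
  rw [← ENNReal.ofReal_rpow_of_pos (by positivity)]
  exact (mul_le_mul_right (ENNReal.rpow_le_rpow hstrip hr) _).trans havg

lemma two_pow_mul_ofReal_le_lintegral_stripPowerSum {n : ℕ} (hn : 0 < n) {r : ℝ} (hr : 0 ≤ r) :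
    2 ^ (n - 1) * ENNReal.ofReal ((1 / (4 * n)) ^ r * (n ^ 5 / 2 ^ 22)) ≤
      ∫⁻ x, stripPowerSum n r x := by
  set K : ℝ≥0∞ := 2 ^ (n - 1) * ENNReal.ofReal ((1 / (4 * n)) ^ r)
  have hpoint (w : ℝ × ℝ) (hw : w ∈ Icc ((n : ℝ) / 64) (n / 32) ×ˢ Icc (-(n / 128) : ℝ) 0)
      (t : ℝ) (ht : t ∈ Icc 0 ((n : ℝ) ^ 2 / 32)) :
      K * ENNReal.ofReal (n / 16) ≤ ∫⁻ x, stripPowerSum n r ![x, w.2, t, w.1] := by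
    obtain ⟨hu, hy⟩ := hw
    obtain ⟨j, hj, hyj⟩ := exists_nat_lt_abs_add_div_mul_le hn hu hy
    set b : ℝ := 2 * (j / n) * t
    have hlen : volume (Icc (-b - n / 32) (-b + n / 32)) = ENNReal.ofReal (n / 16) := by
      rw [Real.volume_Icc]
      congr 1
      ring
    rw [← hlen]
    refine mul_measure_le_lintegral measurableSet_Icc fun x hx ↦
      two_pow_mul_ofReal_le_stripPowerSum hj hr (abs_le.2 ?_) hyj ?_ ?_
    · change -(n / 32 : ℝ) ≤ x + b ∧ x + b ≤ n / 32
      constructor <;> linarith [hx.1, hx.2]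
    · exact (abs_of_nonneg ht.1).trans_le ht.2
    · exact (abs_of_nonneg (le_trans (by positivity) hu.1)).trans_le hu.2
  rw [lintegral_pi_fin_four (measurable_stripPowerSum n r)]
  refine le_of_eq_of_le ?_ (mul_measure_le_lintegral (measurableSet_Icc.prod measurableSet_Icc)
    fun w hw ↦ mul_measure_le_lintegral measurableSet_Icc (hpoint w hw))
  rw [Measure.volume_eq_prod, Measure.prod_prod]
  have hu : (n / 32 - n / 64 : ℝ) = n / 64 := by ring
  simp only [Real.volume_Icc, hu, sub_neg_eq_add, zero_add, sub_zero, K,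
    mul_assoc (2 ^ (n - 1) : ℝ≥0∞)]
  rw [← ENNReal.ofReal_mul (by positivity), ← ENNReal.ofReal_mul (by positivity),
    ← ENNReal.ofReal_mul (by positivity), ← ENNReal.ofReal_mul (by positivity)]
  congr 2
  ring

lemma lintegral_stripPowerSum_le (hq0 : q ≠ 0) (hq : q ≠ ⊤) {n : ℕ}
    (h : ∀ S ⊆ Icc 0 1, MeasurableSet S →
      eLpNorm (extOp 2 2 squareProd (S.indicator 1)) q volume ≤
        C * eLpNorm (S.indicator (1 : (Fin 2 → ℝ) → ℂ)) p volume) :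
    ∫⁻ x, stripPowerSum n q.toReal x ≤ 2 ^ n * C ^ q.toReal := by
  have hq' : 0 < q.toReal := ENNReal.toReal_pos hq0 hq
  have hterm (ε) (hε : ε ∈ (Finset.range n).powerset) :
      ∫⁻ x, ‖extOp 2 2 squareProd ((stripUnion n ε).indicator 1) x‖ₑ ^ q.toReal ≤
        C ^ q.toReal := by
    have hsub := stripUnion_subset (Finset.mem_powerset.1 hε)
    have hnorm := (h _ hsub (measurableSet_stripUnion n ε)).trans
      (mul_le_of_le_one_right' (eLpNorm_indicator_one_le_one hsub p))
    rwa [eLpNorm_eq_lintegral_rpow_enorm_toReal hq0 hq, one_div,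
      ENNReal.rpow_inv_le_iff hq'] at hnorm
  calc ∫⁻ x, stripPowerSum n q.toReal x
      = ∑ ε ∈ (Finset.range n).powerset,
          ∫⁻ x, ‖extOp 2 2 squareProd ((stripUnion n ε).indicator 1) x‖ₑ ^ q.toReal :=
        lintegral_finsetSum _ fun ε _ ↦ measurable_enorm_extOp_stripUnion_rpow n ε _
    _ ≤ ∑ _ ∈ (Finset.range n).powerset, C ^ q.toReal := Finset.sum_le_sum hterm
    _ = 2 ^ n * C ^ q.toReal := by
        rw [Finset.sum_const, Finset.card_powerset, Finset.card_range, nsmul_eq_mul]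
        norm_cast

theorem five_le_of_eLpNorm_extOp_indicator_le (hq0 : q ≠ 0) (hC : C ≠ ⊤)
    (h : ∀ S ⊆ Icc 0 1, MeasurableSet S →
      eLpNorm (extOp 2 2 squareProd (S.indicator 1)) q volume ≤
        C * eLpNorm (S.indicator (1 : (Fin 2 → ℝ) → ℂ)) p volume) : 5 ≤ q := by
  rcases eq_or_ne q ⊤ with rfl | hq
  · exact le_top
  set r := q.toReal
  have hr0 : 0 ≤ r := ENNReal.toReal_nonneg
  have hpow (n : ℕ) (hn : 0 < n) : (n : ℝ) ^ (5 - r) ≤ 2 ^ 23 * 4 ^ r * C.toReal ^ r := by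
    have hn' : (0 : ℝ) < n := by exact_mod_cast hn
    have hle := (two_pow_mul_ofReal_le_lintegral_stripPowerSum hn hr0).trans
      (lintegral_stripPowerSum_le hq0 hq h)
    rw [← mul_pow_sub_one hn.ne' (2 : ℝ≥0∞), mul_comm 2, mul_assoc (2 ^ (n - 1) : ℝ≥0∞),
      ENNReal.mul_le_mul_iff_right (by simp) (by finiteness), ← ENNReal.ofReal_toReal hC,
      ENNReal.ofReal_rpow_of_nonneg ENNReal.toReal_nonneg hr0, ← ENNReal.ofReal_ofNat 2,
      ← ENNReal.ofReal_mul (by norm_num), ENNReal.ofReal_le_ofReal_iff (by positivity),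
      Real.div_rpow zero_le_one (by positivity), Real.one_rpow,
      Real.mul_rpow (by norm_num) hn'.le] at hle
    rw [Real.rpow_sub hn', ← Nat.cast_ofNat (n := 5), Real.rpow_natCast]
    field_simp at hle ⊢
    linarith
  have hr5 : 5 ≤ r := by linarith [nonpos_of_forall_natCast_rpow_le hpow]
  rw [← ENNReal.ofReal_toReal hq, ← ENNReal.ofReal_ofNat 5]
  exact ENNReal.ofReal_le_ofReal hr5

end Necessity

/-- restriction estimates for `Q(ξ) = (ξ₁², ξ₁ξ₂)` on `ℝ²`
(0-indexed in Lean): the estimate holds for `q > 5`, `1/p + 4/q < 1`, and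
conversely any pair `(p, q)` for which the estimate holds with a finite
constant must satisfy `q ≥ 5` and `1/p + 4/q ≤ 1`. -/
theorem statement15 (p q : ℝ≥0∞) (hp : 1 ≤ p) (hq : 1 ≤ q) :
    ((5 < q ∧ 1 / p + 4 / q < 1) →
      ∃ C : ℝ≥0∞, C < ⊤ ∧
        ∀ f : (Fin 2 → ℝ) → ℂ, Measurable f →
          Function.support f ⊆ Set.Icc 0 1 →
          eLpNorm (extOp 2 2
            (fun ξ j => if j = 0 then ξ 0 ^ 2 else ξ 0 * ξ 1) f)
            q volume ≤
            C * eLpNorm f p volume) ∧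
    (∀ C : ℝ≥0∞, C < ⊤ →
      (∀ f : (Fin 2 → ℝ) → ℂ, Measurable f →
        Function.support f ⊆ Set.Icc 0 1 →
        eLpNorm (extOp 2 2
          (fun ξ j => if j = 0 then ξ 0 ^ 2 else ξ 0 * ξ 1) f)
          q volume ≤
          C * eLpNorm f p volume) →
      5 ≤ q ∧ 1 / p + 4 / q ≤ 1) := by
  constructor
  · rintro ⟨hq5, hpq⟩
    obtain ⟨C, hC, hbound⟩ := exists_eLpNorm_extOp_squareProd_le hp hq5 hpq
    exact ⟨C, hC, fun f hf _ ↦ hbound f hf⟩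
  · intro C hC hbound
    have hindicator : ∀ S ⊆ Icc (0 : Fin 2 → ℝ) 1, MeasurableSet S →
        eLpNorm (extOp 2 2 squareProd (S.indicator 1)) q volume
          ≤ C * eLpNorm (S.indicator (1 : (Fin 2 → ℝ) → ℂ)) p volume := fun S hS hSm ↦
      hbound _ (measurable_one.indicator hSm) (support_indicator_subset.trans hS)
    have hp0 : p ≠ 0 := (zero_lt_one.trans_le hp).ne'
    have hq0 : q ≠ 0 := (zero_lt_one.trans_le hq).ne'
    exact ⟨five_le_of_eLpNorm_extOp_indicator_le hq0 hC.ne hindicator,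
      one_div_add_four_div_le_one_of_eLpNorm_extOp_indicator_le hp0 hq0 hC.ne hindicator⟩
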